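/- Assume that SSR holds, i.e., SSR(λ) holds for every cardinal λ ≥ ω₂. Then the Singular Cardinal Hypothesis holds: λ^{cof(λ)} = λ⁺ for every singular cardinal λ with 2^{cof(λ)} < λ. -/

import Mathlib

open Set Cardinal Ordinal

noncomputable section

def omega1 : Ordinal.{0} := (aleph 1).ord


/-- `[A]^ω`: countably infinite subsets of `A`. -/
def sOmega {α : Type*} (A : Set α) : Set (Set α) :=
  {x | x ⊆ A ∧ x.Countable ∧ x.Infinite}

/-- club subsets of `[A]^ω`. -/
def IsClubOmega {α : Type*} (A : Set α) (C : Set (Set α)) : Prop :=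
  C ⊆ sOmega A ∧ (∀ x ∈ sOmega A, ∃ y ∈ C, x ⊆ y) ∧
    ∀ f : ℕ → Set α, (∀ n, f n ∈ C) → (∀ n, f n ⊆ f (n + 1)) → (⋃ n, f n) ∈ C

/-- stationary subsets of `[A]^ω`. -/
def IsStationaryOmega {α : Type*} (A : Set α) (S : Set (Set α)) : Prop :=
  ∀ C, IsClubOmega A C → (S ∩ C).Nonempty

/-- `x ⊑ y` : `y` is an `ω₁`-extension of `x`. -/
def sqsubseteq (x y : Set Ordinal) : Prop :=
  x ⊆ y ∧ x ∩ Iio omega1 = y ∩ Iio omega1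

/-- `S ⊆ [λ]^ω` is full if it is closed under `ω₁`-extensions. -/
def IsFull (lam : Ordinal) (S : Set (Set Ordinal)) : Prop :=
  ∀ x ∈ S, ∀ y ∈ sOmega (Iio lam), sqsubseteq x y → y ∈ S

/-- The semi-stationary reflection principle at `λ`. -/
def SSR (lam : Ordinal) : Prop :=
  ∀ S : Set (Set Ordinal), S ⊆ sOmega (Iio lam) → IsFull lam S →
    IsStationaryOmega (Iio lam) S →
      ∃ I : Set Ordinal, I ⊆ Iio lam ∧ Iio omega1 ⊆ I ∧ #I = aleph 1 ∧
        IsStationaryOmega I (S ∩ sOmega I)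

/-!
By induction on `λ` and Silver's theorem, only the case `2 ^ ω < λ = sup λₙ` with `ν ^ ω ≤ λ` for
all `ν < λ` remains. Then some sequence `f` of length `λ⁺` in `ω → λ`, increasing modulo finite
sets, has an eventual least upper bound `g` whose values have cofinalities unbounded in `λ`. Fix a
ladder of length `ω₁` on every ordinal of cofinality `ω₁`, and let `S` consist of the `x` for
which there are `δ`, in which `x` is cofinal, and ordinals `y n ∈ x`, `n ∈ X`, such that `f δ n`
lies between the step `x ∩ ω₁` of the ladder on `y n` and `y n`, while no limit of `f` along a
ladder agrees with `y` on `X`. This set is full. If it reflected to a set of size `ℵ₁`, Fodor's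
lemma would yield a ladder along which the limit of `f` does agree with some such `y`. There are
only `λ⁺` such limits, whereas the plays of a suitable game produce `λ ^ ω` candidates for `y`; so
if `λ ^ ω > λ⁺`, some play avoids all limits and `S` is stationary.
-/

/-! ### Cofinalities -/

section Cofinality

universe u v

variable {D : Type u} [LinearOrder D]

theorem exists_forall_lt_of_mk_lt_cof {ι : Type v}
    (h : Cardinal.lift.{u} #ι < Cardinal.lift.{v} (Order.cof D)) (φ : ι → D) :
    ∃ b, ∀ i, φ i < b := by
  have hφ : ¬ IsCofinal (range φ) := fun hφ =>
    h.not_ge ((Cardinal.lift_le.2 (Order.cof_le hφ)).trans Cardinal.mk_range_le_lift)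
  simpa [not_isCofinal_iff] using hφ

theorem exists_forall_lt_of_countable {ι : Type v} [Countable ι] (h : ℵ₀ < Order.cof D)
    (φ : ι → D) : ∃ b, ∀ i, φ i < b :=
  exists_forall_lt_of_mk_lt_cof
    ((Cardinal.lift_le_aleph0.2 Cardinal.mk_le_aleph0).trans_lt (Cardinal.aleph0_lt_lift.2 h)) φ

theorem exists_isCofinal_fiber_of_mk_lt_cof {V : Type v}
    (h : Cardinal.lift.{u} #V < Cardinal.lift.{v} (Order.cof D)) (φ : D → V) :
    ∃ v, IsCofinal (φ ⁻¹' {v}) := by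
  by_contra! hφ
  choose b hb using fun v => not_isCofinal_iff.1 (hφ v)
  obtain ⟨c, hc⟩ := exists_forall_lt_of_mk_lt_cof h b
  exact (hb (φ c) c rfl).not_gt (hc _)

theorem mk_Iio_Iio_le {o : Ordinal.{u}} (a : Iio o) :
    #(Iio a) ≤ Cardinal.lift.{u + 1} a.1.card := by
  rw [← Cardinal.mk_Iio_ordinal]
  exact Cardinal.mk_le_of_injective (f := fun c : Iio a => (⟨c, c.2⟩ : Iio a.1))
    fun _ _ h => Subtype.ext (Subtype.ext (Subtype.mk.inj h))

theorem lift_lt_cof_Iio {μ : Cardinal.{u}} {o : Ordinal.{u}} :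
    Cardinal.lift.{u + 1} μ < Order.cof (Iio o) ↔ μ < o.cof := by
  rw [Ordinal.cof_Iio, ← Ordinal.lift_cof, Cardinal.lift_lt]

theorem aleph0_lt_cof_Iio {o : Ordinal.{u}} : ℵ₀ < Order.cof (Iio o) ↔ ℵ₀ < o.cof := by
  rw [← lift_lt_cof_Iio, Cardinal.lift_aleph0]

theorem exists_lt_forall_lt_of_mk_lt_cof {ι : Type v} {o : Ordinal.{u}}
    (h : Cardinal.lift.{u} #ι < Cardinal.lift.{v} o.cof) {φ : ι → Ordinal.{u}}
    (hφ : ∀ i, φ i < o) : ∃ b < o, ∀ i, φ i < b := by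
  have h' : Cardinal.lift.{u + 1} #ι < Cardinal.lift.{v} (Order.cof (Iio o)) := by
    rw [← Cardinal.lift_lt.{max u v, u + 1}] at h
    simpa [Ordinal.cof_Iio, ← Ordinal.lift_cof] using h
  obtain ⟨b, hb⟩ := exists_forall_lt_of_mk_lt_cof h' fun i => (⟨φ i, hφ i⟩ : Iio o)
  exact ⟨b, b.2, hb⟩

theorem exists_lt_forall_lt_of_countable {ι : Type v} [Countable ι] {o : Ordinal.{u}}
    (h : ℵ₀ < o.cof) {φ : ι → Ordinal.{u}} (hφ : ∀ i, φ i < o) : ∃ b < o, ∀ i, φ i < b :=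
  exists_lt_forall_lt_of_mk_lt_cof
    ((Cardinal.lift_le_aleph0.2 Cardinal.mk_le_aleph0).trans_lt (Cardinal.aleph0_lt_lift.2 h)) hφ

end Cofinality

/-! ### Stationary sets -/

section Stationary

variable {α : Type*} [LinearOrder α]

theorem isClub_Ici (a : α) : IsClub (Ici a) where
  dirSupClosed _ hd hne _ _ hx :=
    let ⟨_, hb⟩ := hne
    (hd hb).trans (hx.1 hb)
  isCofinal b := ⟨max a b, le_max_left a b, le_max_right a b⟩

variable [WellFoundedLT α]

theorem isStationary_inter_of_isClub (hα : Order.cof α ≠ ℵ₀) {S C : Set α} (hS : IsStationary S)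
    (hC : IsClub C) : IsStationary (S ∩ C) := fun D hD => by
  simpa only [inter_assoc] using hS (hC.inter hα hD)

variable [IsRegularCardinalOrder α]

theorem mk_Iic_lt_cof (hα : ℵ₀ ≤ Order.cof α) (a : α) : #(Iic a) < Order.cof α := by
  rw [Order.cof_eq_cardinalMk] at hα ⊢
  exact Cardinal.mk_Iic_lt a Cardinal.ord_cardinalMk hα

theorem exists_forall_le_imp_lt (hα : ℵ₀ ≤ Order.cof α) (F : α → α) (a : α) :
    ∃ b, ∀ c ≤ a, F c < b := by
  obtain ⟨b, hb⟩ := exists_forall_lt_of_mk_lt_cof (Cardinal.lift_lt.2 (mk_Iic_lt_cof hα a))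
    fun c : Iic a => F c
  exact ⟨b, fun c hc => hb ⟨c, hc⟩⟩

theorem isClub_setOf_forall_lt_imp_lt (hα : ℵ₀ < Order.cof α) (F : α → α) :
    IsClub {x | ∀ a < x, F a < x} where
  dirSupClosed d hd _ _ x hx a ha := by
    obtain ⟨b, hb, hab⟩ := (lt_isLUB_iff hx).1 ha
    exact (hd hb a hab).trans_le (hx.1 hb)
  isCofinal a := by
    choose G hG using exists_forall_le_imp_lt hα.le fun c => max c (F c)
    let g : ℕ → α := fun n => G^[n] a
    have hg : ∀ n, ∀ c ≤ g n, max c (F c) < g (n + 1) := fun n c hc => by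
      simpa only [g, Function.iterate_succ_apply'] using hG (g n) c hc
    obtain ⟨b, hb⟩ := exists_forall_lt_of_countable hα g
    obtain ⟨x, hx, hmin⟩ := WellFounded.has_min wellFounded_lt (upperBounds (range g))
      ⟨b, forall_mem_range.2 fun n => (hb n).le⟩
    refine ⟨x, fun c hc => ?_, hx ⟨0, rfl⟩⟩
    obtain ⟨n, hn⟩ : ∃ n, c < g n := by
      by_contra! h
      exact hmin c (forall_mem_range.2 h) hc
    exact (le_max_right _ _).trans_lt ((hg n c hn.le).trans_le (hx ⟨n + 1, rfl⟩))

/-- Fodor's pressing down lemma. -/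
theorem exists_isStationary_fiber_of_forall_lt (hα : ℵ₀ < Order.cof α) {S : Set α}
    (hS : IsStationary S) {f : α → α} (hf : ∀ x ∈ S, f x < x) :
    ∃ a, IsStationary {x ∈ S | f x = a} := by
  by_contra! h
  choose C hC hSC using fun a => not_isStationary_iff.1 (h a)
  have hD : ∀ a, IsClub (⋂ c : Iic a, C c) := fun a =>
    IsClub.iInter hα.ne' (Cardinal.lift_lt.2 (mk_Iic_lt_cof hα.le a)) fun c => hC c
  choose G hG hGa using fun a => (hD a).isCofinal a
  have hG' : ∀ a, ∃ b, G a < b := fun a =>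
    let ⟨b, hb⟩ := exists_forall_le_imp_lt hα.le G a
    ⟨b, hb a le_rfl⟩
  choose G' hG' using hG'
  obtain ⟨x, hxS, hx⟩ := hS (isClub_setOf_forall_lt_imp_lt hα G')
  have hxC : x ∈ C (f x) := by
    refine (hC _).isLUB_mem (t := G '' Ico (f x) x) ?_ (Nonempty.image _ ⟨f x, le_rfl, hf x hxS⟩)
      ⟨?_, fun b hb => ?_⟩
    · rintro _ ⟨a, ha, rfl⟩
      exact mem_iInter.1 (hG a) ⟨f x, ha.1⟩
    · rintro _ ⟨a, ha, rfl⟩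
      exact ((hG' a).trans (hx a ha.2)).le
    · refine le_of_forall_lt fun c hc => ?_
      have hm := hx _ (max_lt hc (hf x hxS))
      have hmG := (hGa (max c (f x))).trans_lt (hG' _)
      exact ((le_max_left c (f x)).trans_lt hmG).trans_le
        ((hGa _).trans (hb ⟨_, ⟨(le_max_right c (f x)).trans hmG.le, hm⟩, rfl⟩))
  exact (hSC (f x)).le_bot ⟨⟨hxS, rfl⟩, hxC⟩

end Stationary

theorem isRegularCardinalOrder_Iio_ord {c : Cardinal} (hc : c.IsRegular) :
    IsRegularCardinalOrder (Iio c.ord) where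
  type_lt_le_ord_cof := by
    rw [Ordinal.cof_Iio, ← Ordinal.lift_cof, hc.cof_ord, ← Cardinal.lift_ord]
    simp [Ordinal.type_Iio_lt]

/-! ### Countable ordinals -/

theorem lt_omega1_iff {o : Ordinal.{0}} : o < omega1 ↔ o.card ≤ ℵ₀ := by
  rw [omega1, Cardinal.lt_ord, ← Order.lt_succ_iff, Cardinal.succ_aleph0]

theorem countable_Iio_of_lt_omega1 {o : Ordinal.{0}} (h : o < omega1) : (Iio o).Countable := by
  rw [← Cardinal.le_aleph0_iff_set_countable, Cardinal.mk_Iio_ordinal, Cardinal.lift_le_aleph0]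
  exact lt_omega1_iff.1 h

theorem countable_Iio_Iio_omega1 (k : Iio omega1) : (Iio k).Countable :=
  Cardinal.le_aleph0_iff_set_countable.1
    ((mk_Iio_Iio_le k).trans (Cardinal.lift_le_aleph0.2 (lt_omega1_iff.1 k.2)))

theorem aleph0_lt_cof_Iio_omega1 : ℵ₀ < Order.cof (Iio omega1) := by
  rw [aleph0_lt_cof_Iio, omega1, Cardinal.isRegular_aleph_one.cof_ord]
  exact Cardinal.aleph0_lt_aleph_one

theorem mk_Iio_omega1 : #(Iio omega1) = ℵ₁ := by
  rw [Cardinal.mk_Iio_ordinal, omega1, Cardinal.card_ord, Cardinal.lift_aleph, Ordinal.lift_one]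

instance : IsRegularCardinalOrder (Iio omega1) :=
  isRegularCardinalOrder_Iio_ord Cardinal.isRegular_aleph_one

/-! ### Least upper bounds modulo a filter -/

section LeastUpperBound

universe u v w

theorem exists_chain_of_countable_Iio {W : Type*} [LinearOrder W] [WellFoundedLT W]
    (hW : ∀ k : W, (Iio k).Countable) {β : Type*} [CompleteLattice β] {G : Set β}
    (hG : ∀ s ⊆ G, s.Countable → s.Nonempty → sSup s ∈ G) (hne : G.Nonempty) {N : β → β}
    (hN : MapsTo N G G) :
    ∃ c : W → β, (∀ k, c k ∈ G) ∧ ∀ j k, j < k → N (c j) ≤ c k := by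
  obtain ⟨b, hb⟩ := hne
  let F : ∀ k : W, (∀ j < k, β) → β := fun k c =>
    sSup (insert b (range fun j : Iio k => N (c j j.2)))
  let c : W → β := wellFounded_lt.fix F
  have hc : ∀ k, c k = sSup (insert b (range fun j : Iio k => N (c j))) := fun k =>
    wellFounded_lt.fix_eq F k
  refine ⟨c, fun k => ?_, fun j k hjk => ?_⟩
  · induction k using WellFoundedLT.induction with
    | ind k ih =>
      have := (hW k).to_subtype
      rw [hc]
      exact hG _ (insert_subset hb (range_subset_iff.2 fun j => hN (ih j j.2)))
        ((countable_range _).insert b) (insert_nonempty _ _)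
  · rw [hc k]
    exact le_sSup (mem_insert_of_mem _ ⟨⟨j, hjk⟩, rfl⟩)

theorem mk_pi_le_continuum_of_countable {α : Type u} {ι : Type v} [Countable ι]
    {S : ι → Set α} (hS : ∀ i, (S i).Countable) :
    #(∀ i, S i) ≤ 𝔠 := by
  rw [Cardinal.mk_pi]
  refine (Cardinal.prod_le_prod _ _ fun i => Cardinal.le_aleph0_iff_set_countable.2 (hS i)).trans ?_
  rw [Cardinal.prod_const, Cardinal.lift_aleph0, ← Cardinal.aleph0_power_aleph0]
  exact Cardinal.power_le_power_left Cardinal.aleph0_ne_zero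
    (Cardinal.lift_le_aleph0.2 Cardinal.mk_le_aleph0)

theorem exists_forall_ge_eq_of_antitone {W : Type*} [LinearOrder W] (hW : ℵ₀ < Order.cof W)
    {ι : Type*} [Countable ι] {α : Type*} [LinearOrder α] [WellFoundedLT α] {q : W → ι → α}
    (hq : Antitone q) : ∃ K, ∀ k ≥ K, q k = q K := by
  have : Nonempty W := Order.cof_ne_zero_iff.1 (Cardinal.aleph0_pos.trans hW).ne'
  have hmin : ∀ i, ∃ k, ∀ j, q k i ≤ q j i := fun i => by
    obtain ⟨_, ⟨k, rfl⟩, hk⟩ := WellFounded.has_min wellFounded_lt (range fun k => q k i)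
      (range_nonempty _)
    exact ⟨k, fun j => not_lt.1 (hk _ ⟨j, rfl⟩)⟩
  choose k hk using hmin
  obtain ⟨K, hK⟩ := exists_forall_lt_of_countable hW k
  exact ⟨K, fun j hj => le_antisymm (hq hj) fun i => (hq (hK i).le i).trans (hk i j)⟩

variable {α : Type u} [ConditionallyCompleteLinearOrderBot α]

/-- The least element of `S` that is at least `v`, with junk value `⊥` if there is none. -/
def ceilIn (S : Set α) (v : α) : α := sInf {s ∈ S | v ≤ s}

section ceilIn

variable {S T : Set α} {v w t : α}

theorem ceilIn_le (ht : t ∈ S) (hv : v ≤ t) : ceilIn S v ≤ t := csInf_le' ⟨ht, hv⟩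

variable [WellFoundedLT α]

theorem ceilIn_mem (ht : t ∈ S) (hv : v ≤ t) : ceilIn S v ∈ S :=
  (csInf_mem (s := {s ∈ S | v ≤ s}) ⟨t, ht, hv⟩).1

theorem le_ceilIn (ht : t ∈ S) (hv : v ≤ t) : v ≤ ceilIn S v :=
  (csInf_mem (s := {s ∈ S | v ≤ s}) ⟨t, ht, hv⟩).2

theorem ceilIn_anti (ht : t ∈ S) (hv : v ≤ t) (h : S ⊆ T) : ceilIn T v ≤ ceilIn S v :=
  ceilIn_le (h (ceilIn_mem ht hv)) (le_ceilIn ht hv)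

theorem ceilIn_mono (ht : t ∈ S) (hw : w ≤ t) (h : v ≤ w) : ceilIn S v ≤ ceilIn S w :=
  ceilIn_le (ceilIn_mem ht hw) (h.trans (le_ceilIn ht hw))

end ceilIn

open Filter

/-- `g` is a least upper bound of the family `f` in the order of eventual domination along `l`. -/
def IsEventualLUB {ι : Type*} {α : Type*} [LE α] {D : Type*} (l : Filter ι)
    (f : D → ι → α) (g : ι → α) : Prop :=
  (∀ a, f a ≤ᶠ[l] g) ∧ ∀ u, (∀ a, f a ≤ᶠ[l] u) → g ≤ᶠ[l] u

variable [WellFoundedLT α] {ι : Type v} [Countable ι] {l : Filter ι} {D : Type w} [LinearOrder D]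
  {f : D → ι → α} {top : ι → α}

theorem exists_forall_ge_ceilIn_eventuallyEq (hD : 𝔠 < Order.cof D)
    (hf : ∀ a b, a ≤ b → f a ≤ᶠ[l] f b) (htop : ∀ a, f a ≤ top) {S : ι → Set α}
    (hS : ∀ i, (S i).Countable) (hStop : ∀ i, top i ∈ S i) :
    ∃ a, ∀ b ≥ a, ∀ᶠ i in l, ceilIn (S i) (f b i) = ceilIn (S i) (f a i) := by
  have : Nonempty D := Order.cof_ne_zero_iff.1 (Cardinal.continuum_pos.trans hD).ne'
  obtain ⟨v, hv⟩ := exists_isCofinal_fiber_of_mk_lt_cof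
    ((Cardinal.lift_le_continuum.2 (mk_pi_le_continuum_of_countable hS)).trans_lt
      (Cardinal.continuum_lt_lift.2 hD))
    fun a i => (⟨ceilIn (S i) (f a i), ceilIn_mem (hStop i) (htop a i)⟩ : S i)
  obtain ⟨a, ha⟩ := hv.nonempty
  refine ⟨a, fun b hab => ?_⟩
  obtain ⟨c, hc, hbc⟩ := hv b
  filter_upwards [hf a b hab, hf b c hbc] with i h1 h2
  have hac : ceilIn (S i) (f a i) = ceilIn (S i) (f c i) := by
    simpa using congrArg (fun p => (p i : α)) (ha.trans hc.symm)
  exact le_antisymm ((ceilIn_mono (hStop i) (htop c i) h2).trans_eq hac.symm)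
    (ceilIn_mono (hStop i) (htop b i) h1)

theorem exists_forall_ge_not_ceilIn_eventuallyEq (hD : 𝔠 < Order.cof D)
    (hf : ∀ a b, a ≤ b → f a ≤ᶠ[l] f b) (htop : ∀ a, f a ≤ top) {S T : ι → Set α}
    (hS : ∀ i, (S i).Countable ∧ top i ∈ S i) (hT : ∀ i, (T i).Countable ∧ top i ∈ T i)
    (hne : ∀ a, ∃ b ≥ a, ¬ ∀ᶠ i in l, ceilIn (T i) (f b i) = ceilIn (S i) (f b i)) :
    ∃ a, ∀ b ≥ a, ¬ ∀ᶠ i in l, ceilIn (T i) (f b i) = ceilIn (S i) (f b i) := by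
  obtain ⟨a, ha⟩ := exists_forall_ge_ceilIn_eventuallyEq hD hf htop (fun i => (hS i).1)
    fun i => (hS i).2
  obtain ⟨a', ha'⟩ := exists_forall_ge_ceilIn_eventuallyEq hD hf htop (fun i => (hT i).1)
    fun i => (hT i).2
  refine ⟨max a a', fun b hb h => ?_⟩
  obtain ⟨b', hb', hne⟩ := hne (max a a')
  refine hne ?_
  filter_upwards [h, ha b (le_of_max_le_left hb), ha' b (le_of_max_le_right hb),
    ha b' (le_of_max_le_left hb'), ha' b' (le_of_max_le_right hb')] with i h h1 h2 h3 h4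
  rw [h4, ← h2, h, h1, h3]

theorem exists_maximal_ceilIn_eventuallyEq (hD : 𝔠 < Order.cof D)
    (hf : ∀ a b, a ≤ b → f a ≤ᶠ[l] f b) (htop : ∀ a, f a ≤ top) :
    ∃ S : ι → Set α, (∀ i, (S i).Countable ∧ top i ∈ S i) ∧ ∀ T : ι → Set α,
      (∀ i, (T i).Countable ∧ top i ∈ T i) → S ≤ T →
        ∃ a, ∀ b ≥ a, ∀ᶠ i in l, ceilIn (T i) (f b i) = ceilIn (S i) (f b i) := by
  by_contra! hcon
  choose! N hNG hN hne using hcon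
  have hG : ∀ s ⊆ {S : ι → Set α | ∀ i, (S i).Countable ∧ top i ∈ S i}, s.Countable → s.Nonempty →
      ∀ i, ((sSup s) i).Countable ∧ top i ∈ (sSup s) i := fun s hs hsc ⟨S, hS⟩ i => by
    have := hsc.to_subtype
    rw [sSup_apply]
    exact ⟨countable_iUnion fun T : s => (hs T.2 i).1, mem_iUnion.2 ⟨⟨S, hS⟩, (hs hS i).2⟩⟩
  obtain ⟨c, hcG, hc⟩ := exists_chain_of_countable_Iio countable_Iio_Iio_omega1 hG
    ⟨fun i => {top i}, fun i => ⟨countable_singleton _, rfl⟩⟩ hNG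
  choose a ha using fun k => exists_forall_ge_not_ceilIn_eventuallyEq hD hf htop (hcG k)
    (hNG _ (hcG k)) (fun a => by simpa using hne _ (hcG k) a)
  have hω₁ : Cardinal.lift.{w} #(Iio omega1) < Cardinal.lift.{1} (Order.cof D) := by
    rw [mk_Iio_omega1, Cardinal.lift_aleph, Ordinal.lift_one]
    exact Cardinal.aleph_one_le_continuum.trans_lt (Cardinal.continuum_lt_lift.2 hD)
  obtain ⟨b, hb⟩ := exists_forall_lt_of_mk_lt_cof hω₁ a
  have hmono : Monotone c := monotone_iff_forall_lt.2 fun j k hjk =>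
    (hN _ (hcG j)).trans (hc j k hjk)
  obtain ⟨K, hK⟩ := exists_forall_ge_eq_of_antitone aleph0_lt_cof_Iio_omega1
    (q := fun k i => ceilIn (c k i) (f b i))
    fun j k hjk i => ceilIn_anti (hcG j i).2 (htop b i) (hmono hjk i)
  obtain ⟨K', hKK'⟩ := exists_forall_lt_of_countable aleph0_lt_cof_Iio_omega1 fun _ : Unit => K
  refine ha K b (hb K).le (Eventually.of_forall fun i => le_antisymm ?_ ?_)
  · exact ceilIn_anti (hcG K i).2 (htop b i) (hN _ (hcG K) i)
  · exact (congrFun (hK K' (hKK' ()).le) i).symm.trans_le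
      (ceilIn_anti (hNG _ (hcG K) i).2 (htop b i) (hc K K' (hKK' ()) i))

theorem exists_isEventualLUB (hD : 𝔠 < Order.cof D) (hf : ∀ a b, a ≤ b → f a ≤ᶠ[l] f b)
    (htop : ∀ a, f a ≤ top) : ∃ g, IsEventualLUB l f g := by
  obtain ⟨S, hS, hmax⟩ := exists_maximal_ceilIn_eventuallyEq hD hf htop
  obtain ⟨a, ha⟩ := exists_forall_ge_ceilIn_eventuallyEq hD hf htop (fun i => (hS i).1)
    fun i => (hS i).2
  refine ⟨fun i => ceilIn (S i) (f a i), fun b => ?_, fun u hu => ?_⟩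
  · filter_upwards [hf b _ (le_max_right a b), ha _ (le_max_left a b)] with i hb hi
    exact hb.trans ((le_ceilIn (hS i).2 (htop _ i)).trans_eq hi)
  · obtain ⟨b, hb⟩ := hmax (fun i => insert (u i) (S i))
      (fun i => ⟨(hS i).1.insert _, mem_insert_of_mem _ (hS i).2⟩) fun i => subset_insert _ _
    filter_upwards [ha _ (le_max_left a b), hb _ (le_max_right a b), hu (max a b)] with i h1 h2 h3
    rw [← h1, ← h2]
    exact ceilIn_le (mem_insert _ _) h3


end LeastUpperBound

section EventualLUB

open Filter

universe u v

namespace IsEventualLUB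

variable {ι α D : Type*} [LinearOrder α] {l : Filter ι} {f : D → ι → α} {g : ι → α}

theorem comp (h : IsEventualLUB l f g) {ι' : Type*} {s : ι' → ι} (hs : Function.Injective s) :
    IsEventualLUB (l.comap s) (fun a => f a ∘ s) (g ∘ s) := by
  refine ⟨fun a => (h.1 a).comap s, fun u hu => ?_⟩
  have hext : ∀ a, f a ≤ᶠ[l] Function.extend s u g := fun a => by
    filter_upwards [h.1 a, eventually_comap.1 (hu a)] with i hg hu
    by_cases hi : ∃ m, s m = i
    · obtain ⟨m, rfl⟩ := hi
      rw [hs.extend_apply]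
      exact hu m rfl
    · rwa [Function.extend_apply' _ _ _ hi]
  refine ((h.2 _ hext).comap s).mono fun m hm => ?_
  rwa [hs.extend_apply] at hm

theorem exists_forall_ge_frequently [LinearOrder D] [l.NeBot] (h : IsEventualLUB l f g)
    (hf : ∀ a b, a ≤ b → f a ≤ᶠ[l] f b) (hfg : ∀ a, ∀ᶠ i in l, f a i < g i) {ε : ι → α}
    (hε : ∀ i, ε i < g i) : ∃ a, ∀ b ≥ a, ∃ᶠ i in l, ε i ≤ f b i ∧ f b i < g i := by
  obtain ⟨a, ha⟩ : ∃ a, ¬ f a ≤ᶠ[l] ε := by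
    by_contra! hle
    obtain ⟨i, hi⟩ := (h.2 ε hle).exists
    exact (hε i).not_ge hi
  refine ⟨a, fun b hb => ?_⟩
  exact ((not_eventually.1 ha).and_eventually ((hf a b hb).and (hfg b))).mono
    fun i hi => ⟨(not_le.1 hi.1).le.trans hi.2.1, hi.2.2⟩

end IsEventualLUB

theorem exists_cofinal_subset_Iio {o : Ordinal.{u}} {μ : Cardinal.{u}} (h : o.cof ≤ μ) :
    ∃ S ⊆ Iio o, #S ≤ Cardinal.lift.{u + 1} μ ∧ ∀ v < o, ∃ t ∈ S, v ≤ t := by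
  obtain ⟨s, hs, hsc⟩ := Order.exists_cof_eq (Iio o)
  refine ⟨Subtype.val '' s, by rintro _ ⟨t, -, rfl⟩; exact t.2, ?_, fun v hv => ?_⟩
  · refine Cardinal.mk_image_le.trans ?_
    rw [hsc, Ordinal.cof_Iio, ← Ordinal.lift_cof]
    exact Cardinal.lift_le.2 h
  · obtain ⟨t, ht, hvt⟩ := hs ⟨v, hv⟩
    exact ⟨t, ⟨t, ht, rfl⟩, hvt⟩

theorem exists_small_approximation {o : Ordinal.{u}} {μ : Cardinal.{u}} (hμ : 1 ≤ μ) :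
    ∃ S : Set Ordinal.{u}, #S ≤ Cardinal.lift.{u + 1} μ ∧ (0 < o → o.cof ≤ μ → S ⊆ Iio o) ∧
      ∃ c : Ordinal.{u} → S, ∀ v < o, v ≤ c v := by
  by_cases h : 0 < o ∧ o.cof ≤ μ
  · obtain ⟨S, hS, hSμ, hSo⟩ := exists_cofinal_subset_Iio h.2
    have : ∀ v, ∃ t : S, v < o → v ≤ t := fun v => by
      by_cases hv : v < o
      · obtain ⟨t, ht, hvt⟩ := hSo v hv
        exact ⟨⟨t, ht⟩, fun _ => hvt⟩
      · obtain ⟨t, ht, -⟩ := hSo 0 h.1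
        exact ⟨⟨t, ht⟩, fun hv' => absurd hv' hv⟩
    choose c hc using this
    exact ⟨S, hSμ, fun _ _ => hS, c, hc⟩
  · refine ⟨{o}, ?_, fun h0 hμ => absurd ⟨h0, hμ⟩ h, fun _ => ⟨o, rfl⟩, fun v hv => hv.le⟩
    rw [Cardinal.mk_singleton]
    exact (Cardinal.lift_one.symm.le.trans (Cardinal.lift_le.2 hμ))

theorem IsEventualLUB.eventually_lt_cof {l : Filter ℕ} {D : Type v} [LinearOrder D]
    {f : D → ℕ → Ordinal.{u}} {g : ℕ → Ordinal.{u}} (h : IsEventualLUB l f g)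
    (hf : ∀ a b, a ≤ b → f a ≤ᶠ[l] f b) (hfg : ∀ a, ∀ᶠ i in l, f a i < g i) {μ : Cardinal.{u}}
    (hμ : 1 ≤ μ) (hD : Cardinal.lift.{v} (μ ^ ℵ₀) < Cardinal.lift.{u} (Order.cof D)) :
    ∀ᶠ i in l, μ < (g i).cof := by
  by_contra hcon
  choose S hSμ hSg c hc using fun i => exists_small_approximation (o := g i) hμ
  have hS : #(∀ i, S i) ≤ Cardinal.lift.{u + 1} (μ ^ ℵ₀) := by
    rw [Cardinal.mk_pi]
    refine (Cardinal.prod_le_prod _ _ hSμ).trans ?_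
    simp [Cardinal.prod_const]
  have hS' : Cardinal.lift.{v} #(∀ i, S i) < Cardinal.lift.{u + 1} (Order.cof D) := by
    refine (Cardinal.lift_le.2 hS).trans_lt ?_
    have := Cardinal.lift_lt.{max u v, u + 1}.2 hD
    simpa only [Cardinal.lift_lift] using this
  obtain ⟨w, hw⟩ := exists_isCofinal_fiber_of_mk_lt_cof hS' fun a i => c i (f a i)
  have hfw : ∀ a, f a ≤ᶠ[l] fun i => (w i).1 := fun a => by
    obtain ⟨b, rfl, hab⟩ := hw a
    filter_upwards [hf a b hab, hfg b] with i hab hb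
    exact hab.trans (hc i _ hb)
  have : Nonempty D := Order.cof_ne_zero_iff.1 fun h0 => by simp [h0] at hD
  obtain ⟨i, hi, hgw, hpos⟩ := ((not_eventually.1 hcon).and_eventually
    ((h.2 _ hfw).and (hfg (Classical.arbitrary D)))).exists
  exact (hSg i (bot_le.trans_lt hpos) (not_lt.1 hi) (w i).2).not_ge hgw

end EventualLUB

/-! ### Scales -/

section Scale

open Filter

universe u v w

theorem exists_eventually_lt_of_rank {D : Type u} [LinearOrder D] [WellFoundedLT D] {α : ℕ → Type v}
    [∀ n, LinearOrder (α n)] {r : ∀ a : D, Iio a → ℕ}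
    (hr : ∀ a n, Cardinal.lift.{v} #{c // r a c ≤ n} < Cardinal.lift.{u} (Order.cof (α n))) :
    ∃ f : D → ∀ n, α n, ∀ a b, a < b → ∀ᶠ n in atTop, f a n < f b n := by
  have hnext : ∀ a (p : ∀ c < a, ∀ n, α n), ∃ q : ∀ n, α n, ∀ n c, r a c ≤ n →
      p c c.2 n < q n := fun a p => by
    choose q hq using fun n => exists_forall_lt_of_mk_lt_cof (hr a n) fun c => p c.1 c.1.2 n
    exact ⟨q, fun n c hcn => hq n ⟨c, hcn⟩⟩
  choose F hF using hnext
  refine ⟨wellFounded_lt.fix F, fun a b hab => ?_⟩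
  filter_upwards [eventually_ge_atTop (r b ⟨a, hab⟩)] with n hn
  rw [wellFounded_lt.fix_eq F b]
  exact hF b (fun c _ => wellFounded_lt.fix F c) n ⟨a, hab⟩ hn

theorem exists_rank {A : Type v} {lam : Cardinal.{u}}
    (hA : Cardinal.lift.{u} #A ≤ Cardinal.lift.{v} lam) {mu : ℕ → Cardinal.{u}}
    (hmono : Monotone mu)
    (hcof : ∀ ν < lam, ∃ n, ν < mu n) :
    ∃ r : A → ℕ, ∀ n, Cardinal.lift.{u} #{a // r a ≤ n} ≤ Cardinal.lift.{v} (mu n) := by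
  have hA' : Cardinal.lift.{u + 1} #A ≤ Cardinal.lift.{v} #(Iio lam.ord) := by
    simpa using Cardinal.lift_le.{u + 1}.2 hA
  obtain ⟨e⟩ := Cardinal.lift_mk_le'.1 hA'
  have hlt : ∀ a, ∃ n, (e a).1 < (mu n).ord := fun a => by
    obtain ⟨n, hn⟩ := hcof _ (Cardinal.lt_ord.1 (e a).2)
    exact ⟨n, Cardinal.lt_ord.2 hn⟩
  choose r hr using hlt
  refine ⟨r, fun n => ?_⟩
  have hinj : Function.Injective fun a : {a // r a ≤ n} =>
      (⟨e a, (hr a).trans_le (Cardinal.ord_le_ord.2 (hmono a.2))⟩ : Iio (mu n).ord) :=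
    fun a b hab => Subtype.ext (e.injective (Subtype.ext (Subtype.mk.inj hab)))
  rw [← Cardinal.lift_le.{u + 1}]
  have := Cardinal.lift_mk_le_lift_mk_of_injective hinj
  rw [Cardinal.mk_Iio_ordinal, Cardinal.card_ord] at this
  simpa using this

theorem exists_eventually_lt_seq {lam : Cardinal.{u}} {mu : ℕ → Cardinal.{u}} (hmu : ∀ n, ℵ₀ ≤ mu n)
    (hmono : Monotone mu) (hcof : ∀ ν < lam, ∃ n, ν < mu n) :
    ∃ f : Iio (Order.succ lam).ord → ℕ → Ordinal.{u},
      (∀ a n, f a n < (Order.succ (mu n)).ord) ∧ ∀ a b, a < b → ∀ᶠ n in atTop, f a n < f b n := by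
  have hr : ∀ a : Iio (Order.succ lam).ord, ∃ r : Iio a → ℕ, ∀ n,
      Cardinal.lift.{u} #{c // r c ≤ n} ≤ Cardinal.lift.{u + 1} (mu n) := fun a => by
    refine exists_rank ?_ hmono hcof
    rw [Cardinal.lift_id'.{u, u + 1}]
    exact (mk_Iio_Iio_le a).trans (Cardinal.lift_le.2 (Order.lt_succ_iff.1 (Cardinal.lt_ord.1 a.2)))
  choose r hr using hr
  obtain ⟨f, hf⟩ := exists_eventually_lt_of_rank (α := fun n => Iio (Order.succ (mu n)).ord)
    (r := r) fun a n => by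
      rw [Cardinal.lift_id, ← Cardinal.lift_id'.{u, u + 1} #_]
      refine (hr a n).trans_lt ?_
      rw [Cardinal.lift_id, lift_lt_cof_Iio, (Cardinal.isRegular_succ (hmu n)).cof_ord]
      exact Order.lt_succ _
  exact ⟨fun a n => f a n, fun a n => (f a n).2, fun a b hab => hf a b hab⟩

theorem lift_lt_cof_Iio_ord_succ {lam ν : Cardinal.{u}} (hlam : ℵ₀ ≤ lam) (hν : ν ≤ lam) :
    Cardinal.lift.{u + 1} ν < Order.cof (Iio (Order.succ lam).ord) := by
  rw [lift_lt_cof_Iio, (Cardinal.isRegular_succ hlam).cof_ord]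
  exact Order.lt_succ_iff.2 hν

theorem exists_isEventualLUB_lt_cof {lam : Cardinal.{u}} {mu : ℕ → Cardinal.{u}}
    (hmu : ∀ n, ℵ₀ ≤ mu n) (hmono : Monotone mu) (hmul : ∀ n, mu n < lam)
    (hcof : ∀ ν < lam, ∃ n, ν < mu n) (hpow : ∀ ν < lam, ν ^ ℵ₀ ≤ lam) :
    ∃ (f : Iio (Order.succ lam).ord → ℕ → Ordinal.{u}) (g : ℕ → Ordinal.{u}),
      (∀ a b, a ≤ b → f a ≤ᶠ[atTop] f b) ∧ (∀ a, ∀ᶠ n in atTop, f a n < g n) ∧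
      IsEventualLUB atTop f g ∧ ∀ m, ∀ᶠ n in atTop, g n < lam.ord ∧ mu m < (g n).cof := by
  have hκ : ∀ ν ≤ lam, Cardinal.lift.{u + 1} ν < Order.cof (Iio (Order.succ lam).ord) := fun ν =>
    lift_lt_cof_Iio_ord_succ ((hmu 0).trans (hmul 0).le)
  have hcont : 𝔠 < Order.cof (Iio (Order.succ lam).ord) := by
    have h2 : 𝔠 ≤ lam := (Cardinal.power_le_power_right
      ((Cardinal.natCast_lt_aleph0 (n := 2)).le.trans (hmu 0))).trans (hpow _ (hmul 0))
    simpa only [Cardinal.lift_continuum] using hκ _ h2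
  obtain ⟨f, hftop, hf⟩ := exists_eventually_lt_seq hmu hmono hcof
  have hfle : ∀ a b, a ≤ b → f a ≤ᶠ[atTop] f b := fun a b hab => by
    rcases hab.eq_or_lt with rfl | hab
    exacts [EventuallyLE.rfl, (hf a b hab).mono fun _ => le_of_lt]
  obtain ⟨g, hg⟩ := exists_isEventualLUB hcont hfle fun a n => (hftop a n).le
  have hfg : ∀ a, ∀ᶠ n in atTop, f a n < g n := fun a => by
    obtain ⟨b, hb⟩ := exists_forall_lt_of_countable (Cardinal.aleph0_lt_continuum.trans hcont)
      fun _ : Unit => a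
    filter_upwards [hf a b (hb ()), hg.1 b] with n h1 h2 using h1.trans_le h2
  refine ⟨f, g, hfle, hfg, hg, fun m => Eventually.and ?_ ?_⟩
  · filter_upwards [hg.2 _ fun a => Eventually.of_forall fun n => (hftop a n).le] with n hn
    obtain ⟨m, hm⟩ := hcof _ (hmul n)
    exact hn.trans_lt (Cardinal.ord_lt_ord.2 ((Order.succ_le_of_lt hm).trans_lt (hmul m)))
  · refine hg.eventually_lt_cof hfle hfg (Cardinal.one_le_aleph0.trans (hmu m)) ?_
    rw [Cardinal.lift_id'.{u, u + 1}]
    exact hκ _ (hpow _ (hmul m))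

/-- A weak form of `f` being a scale of length `κ` in `∏ g`: for every `ε ∈ ∏ g` and all large
`δ < κ`, the value `f δ m` lies infinitely often between `ε m` and `g m`. -/
def IsWeakScale (κ : Ordinal.{u}) (f : Ordinal.{u} → ℕ → Ordinal.{u}) (g : ℕ → Ordinal.{u}) :
    Prop :=
  ∀ ε : ℕ → Ordinal.{u}, (∀ m, ε m < g m) → ∃ α < κ, ∀ δ ∈ Ico α κ,
    ∃ᶠ m in atTop, ε m ≤ f δ m ∧ f δ m < g m

theorem exists_isWeakScale {lam : Cardinal.{u}} {mu : ℕ → Cardinal.{u}} (hmu : ∀ n, ℵ₀ ≤ mu n)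
    (hmono : Monotone mu) (hmul : ∀ n, mu n < lam) (hcof : ∀ ν < lam, ∃ n, ν < mu n)
    (hpow : ∀ ν < lam, ν ^ ℵ₀ ≤ lam) :
    ∃ (f : Ordinal.{u} → ℕ → Ordinal.{u}) (g : ℕ → Ordinal.{u}),
      (∀ m, g m < lam.ord) ∧ (∀ m, mu m < (g m).cof) ∧
        IsWeakScale (Order.succ lam).ord f g := by
  obtain ⟨f, g, hf, hfg, hg, hgm⟩ := exists_isEventualLUB_lt_cof hmu hmono hmul hcof hpow
  obtain ⟨s, hs, hs'⟩ := extraction_forall_of_eventually hgm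
  refine ⟨Function.extend Subtype.val (fun a => f a ∘ s) 0, g ∘ s, fun m => (hs' m).1,
    fun m => (hs' m).2, fun ε hε => ?_⟩
  have hgs := hg.comp hs.injective
  rw [comap_embedding_atTop (fun _ _ => hs.le_iff_le) fun n => ⟨n, hs.le_apply⟩] at hgs
  obtain ⟨a, ha⟩ := hgs.exists_forall_ge_frequently
    (fun a b hab => hs.tendsto_atTop.eventually (hf a b hab))
    (fun a => hs.tendsto_atTop.eventually (hfg a)) hε
  refine ⟨a, a.2, fun δ hδ => ?_⟩
  rw [Subtype.val_injective.extend_apply _ _ (⟨δ, hδ.2⟩ : Iio _)]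
  exact ha ⟨δ, hδ.2⟩ hδ.1

end Scale

/-! ### Transfer of stationarity to `ω₁` -/

section Transfer

variable {e : Iio omega1 → Ordinal.{0}}

theorem exists_isLUB_of_countable {ι : Type*} [Countable ι] (φ : ι → Iio omega1) :
    ∃ ξ, IsLUB (range φ) ξ := by
  obtain ⟨b, hb⟩ := exists_forall_lt_of_countable aleph0_lt_cof_Iio_omega1 φ
  obtain ⟨ξ, hξ, hmin⟩ := WellFounded.has_min wellFounded_lt (upperBounds (range φ))
    ⟨b, forall_mem_range.2 fun i => (hb i).le⟩
  exact ⟨ξ, hξ, fun x hx => not_lt.1 (hmin x hx)⟩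

theorem isClub_inter {C D : Set (Iio omega1)} (hC : IsClub C) (hD : IsClub D) : IsClub (C ∩ D) :=
  hC.inter aleph0_lt_cof_Iio_omega1.ne' hD

theorem exists_isClub_image_Iio_inter_eq (he : Iio omega1 ⊆ range e) :
    ∃ E : Set (Iio omega1), IsClub E ∧ ∀ ξ ∈ E, e '' Iio ξ ∩ Iio omega1 = Iio ξ.1 := by
  choose inv hinv using fun η : Iio omega1 => he η.2
  classical
  refine ⟨_, isClub_setOf_forall_lt_imp_lt aleph0_lt_cof_Iio_omega1
    fun η => max (inv η) (if h : e η < omega1 then ⟨e η, h⟩ else η), fun ξ hξ => ?_⟩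
  ext z
  refine ⟨?_, fun hz => ?_⟩
  · rintro ⟨⟨j, hj, rfl⟩, hz⟩
    have := (le_max_right _ _).trans_lt (hξ j hj)
    rwa [dif_pos (show e j < omega1 from hz)] at this
  · have hzω : z < omega1 := lt_trans hz ξ.2
    exact ⟨⟨_, (le_max_left _ _).trans_lt (hξ ⟨z, hzω⟩ hz), hinv _⟩, hzω⟩

theorem isClubOmega_image_Iio {D : Set (Iio omega1)} (hD : IsClub D)
    (hω : ∀ ξ ∈ D, Iio ω ⊆ e '' Iio ξ) :
    IsClubOmega (range e) ((fun ξ => e '' Iio ξ) '' D) := by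
  refine ⟨?_, fun x hx => ?_, fun x hx _ => ?_⟩
  · rintro _ ⟨ξ, hξ, rfl⟩
    refine ⟨image_subset_range _ _, (countable_Iio_Iio_omega1 ξ).image e, ?_⟩
    exact infinite_of_injective_forall_mem Nat.cast_injective fun n =>
      hω ξ hξ (Ordinal.natCast_lt_omega0 n)
  · have := hx.2.1.to_subtype
    choose j hj using fun z : x => hx.1 z.2
    obtain ⟨b, hb⟩ := exists_forall_lt_of_countable aleph0_lt_cof_Iio_omega1 j
    obtain ⟨ξ, hξ, hbξ⟩ := hD.isCofinal b
    exact ⟨_, ⟨ξ, hξ, rfl⟩, fun z hz => ⟨j ⟨z, hz⟩, (hb _).trans_le hbξ, hj ⟨z, hz⟩⟩⟩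
  · choose ξ hξ hx using hx
    obtain ⟨ζ, hζ⟩ := exists_isLUB_of_countable ξ
    refine ⟨ζ, hD.isLUB_mem (range_subset_iff.2 hξ) (range_nonempty ξ) hζ, ?_⟩
    simp only [← hx, ← image_iUnion]
    congr 1
    ext j
    simpa using lt_isLUB_iff hζ

theorem isStationary_image_Iio_mem (he : Iio omega1 ⊆ range e) {S : Set (Set Ordinal.{0})}
    (hS : IsStationaryOmega (range e) S) :
    IsStationary {ξ | e '' Iio ξ ∈ S ∧ e '' Iio ξ ∩ Iio omega1 = Iio ξ.1} := by
  intro D hD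
  obtain ⟨E, hE, hEeq⟩ := exists_isClub_image_Iio_inter_eq he
  have hωlt : ω < omega1 := by
    rw [omega1, Cardinal.lt_ord, Ordinal.card_omega0]
    exact Cardinal.aleph0_lt_aleph_one
  have hω : ∀ ξ ∈ D ∩ (E ∩ Ici ⟨ω, hωlt⟩), Iio ω ⊆ e '' Iio ξ := fun ξ hξ => by
    refine (Iio_subset_Iio hξ.2.2).trans ?_
    rw [← hEeq ξ hξ.2.1]
    exact inter_subset_left
  obtain ⟨_, hxS, ξ, hξ, rfl⟩ := hS _ (isClubOmega_image_Iio
    (isClub_inter hD (isClub_inter hE (isClub_Ici _))) hω)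
  exact ⟨ξ, ⟨hxS, hEeq ξ hξ.2.1⟩, hξ.1⟩

end Transfer

/-! ### A full set that does not reflect -/

section Nonreflecting

/-- `c` is a monotone `ω₁`-sequence cofinal in `y`. -/
structure IsLadder (c : Iio omega1 → Ordinal.{0}) (y : Ordinal.{0}) : Prop where
  monotone : Monotone c
  lt : ∀ i, c i < y
  exists_lt : ∀ z < y, ∃ i, z < c i

open Classical in
/-- A choice of a ladder on every ordinal of cofinality `ω₁`, with junk value `0` elsewhere. -/
def ladder (y : Ordinal.{0}) : Iio omega1 → Ordinal.{0} :=
  if h : ∃ c, IsLadder c y then h.choose else 0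

theorem IsLadder.isLadder_ladder {c : Iio omega1 → Ordinal.{0}} {y : Ordinal.{0}}
    (hc : IsLadder c y) : IsLadder (ladder y) y := by
  have h : ∃ c, IsLadder c y := ⟨c, hc⟩
  rw [ladder, dif_pos h]
  exact h.choose_spec

/-- The supremum of the first `ξ` steps of the ladder on `β`. -/
def ladderSup (β : Ordinal.{0}) (ξ : Iio omega1) : Ordinal.{0} :=
  ⨆ η : Iio ξ, (ladder β η + 1)

/-- The values of the `n`-th coordinate of `f` along the suprema of the ladder on `β`. -/
def ladderTrace (f : Ordinal.{0} → ℕ → Ordinal.{0}) (β : Ordinal.{0}) (n : ℕ) : Set Ordinal.{0} :=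
  range fun ξ => f (ladderSup β ξ) n

/-- The sequences of ordinals whose `n`-th term is a limit point (or `0`) of the trace of `f · n`
along one fixed ladder; these are the sequences that a reflecting set would have to name. -/
def ladderLimits (κ : Ordinal.{0}) (f : Ordinal.{0} → ℕ → Ordinal.{0}) : Set (ℕ → Ordinal.{0}) :=
  {l | ∃ β < κ, ∀ n, sSup (ladderTrace f β n ∩ Iio (l n)) = l n}

/-- `(ξ, δ, X, y)` witnesses that `x` belongs to the non-reflecting set: `ξ = x ∩ ω₁`, the set
`x` is cofinal in `δ`, and for `n ∈ X` the value `f δ n` lies between the `ξ`-th step of the ladder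
on `y n ∈ x` and `y n` itself, where `y` disagrees on `X` with all ladder limits. -/
structure IsWitness (κ : Ordinal.{0}) (f : Ordinal.{0} → ℕ → Ordinal.{0}) (x : Set Ordinal.{0})
    (ξ : Iio omega1) (δ : Ordinal.{0}) (X : Set ℕ) (y : ℕ → Ordinal.{0}) : Prop where
  inter_eq : x ∩ Iio omega1 = Iio ξ.1
  lt : δ < κ
  exists_mem : ∀ α < δ, ∃ z ∈ x, α ≤ z ∧ z < δ
  mem : ∀ n ∈ X, y n ∈ x
  isLadder : ∀ n ∈ X, IsLadder (ladder (y n)) (y n)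
  ladder_le : ∀ n ∈ X, ladder (y n) ξ ≤ f δ n
  lt_apply : ∀ n ∈ X, f δ n < y n
  exists_ne : ∀ l ∈ ladderLimits κ f, ∃ n ∈ X, y n ≠ l n

/-- The full set to which semi-stationary reflection is applied. -/
def nonreflectingSet (κ : Ordinal.{0}) (f : Ordinal.{0} → ℕ → Ordinal.{0}) :
    Set (Set Ordinal.{0}) :=
  {x ∈ sOmega (Iio κ) | ∃ ξ δ X y, IsWitness κ f x ξ δ X y}

variable {κ : Ordinal.{0}} {f : Ordinal.{0} → ℕ → Ordinal.{0}}

theorem isFull_nonreflectingSet : IsFull κ (nonreflectingSet κ f) := by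
  rintro x ⟨-, ξ, δ, X, y, h⟩ x' hx' ⟨hxx', heq⟩
  exact ⟨hx', ξ, δ, X, y, { h with
    inter_eq := heq ▸ h.inter_eq
    exists_mem := fun α hα => (h.exists_mem α hα).imp fun z hz => ⟨hxx' hz.1, hz.2⟩
    mem := fun n hn => hxx' (h.mem n hn) }⟩

theorem setOf_sSup_inter_Iio_eq_subset {α : Type*} [ConditionallyCompleteLinearOrderBot α]
    [WellFoundedLT α] (T : Set α) :
    {v | sSup (T ∩ Iio v) = v} ⊆ insert (sSup T) ((fun h => sSup (T ∩ Iio h)) '' T) := by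
  intro v hv
  by_cases hT : (T ∩ Ici v).Nonempty
  · refine .inr ⟨sInf (T ∩ Ici v), (csInf_mem hT).1, Eq.trans (congrArg sSup ?_) hv⟩
    ext h
    refine and_congr_right fun hh => Iff.intro (fun hlt => not_le.1 fun hvh => ?_) fun hlt => ?_
    · exact (csInf_le' (show h ∈ T ∩ Ici v from ⟨hh, hvh⟩)).not_gt hlt
    · exact lt_of_lt_of_le hlt (csInf_mem hT).2
  · refine .inl (hv.symm.trans (congrArg sSup (inter_eq_left.2 fun h hh => ?_)))
    exact not_le.1 fun hvh => hT ⟨h, hh, hvh⟩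

theorem mk_ladderLimits_le : #(ladderLimits κ f) ≤ Cardinal.lift.{1} κ.card * 𝔠 := by
  have hT : ∀ β n, #{v | sSup (ladderTrace f β n ∩ Iio v) = v} ≤ ℵ₁ := fun β n => by
    refine (Cardinal.mk_le_mk_of_subset (setOf_sSup_inter_Iio_eq_subset _)).trans ?_
    refine (Cardinal.mk_insert_le.trans (add_le_add_left Cardinal.mk_image_le _)).trans ?_
    refine (add_le_add_left (Cardinal.mk_range_le.trans mk_Iio_omega1.le) _).trans ?_
    exact (Cardinal.add_one_eq (Cardinal.aleph0_le_aleph 1)).le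
  have hpi : ∀ β, #{l : ℕ → Ordinal.{0} | ∀ n, sSup (ladderTrace f β n ∩ Iio (l n)) = l n} ≤ 𝔠 := by
    intro β
    refine (Cardinal.mk_congr (Equiv.subtypePiEquivPi (p := fun n v =>
      sSup (ladderTrace f β n ∩ Iio v) = v))).trans_le ?_
    rw [Cardinal.mk_pi]
    refine (Cardinal.prod_le_prod _ _ (hT β)).trans ?_
    rw [Cardinal.prod_const, Cardinal.mk_nat, Cardinal.lift_aleph0, Cardinal.lift_aleph,
      Ordinal.lift_one]
    refine (Cardinal.power_le_power_right Cardinal.aleph_one_le_continuum).trans ?_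
    rw [Cardinal.continuum_power_aleph0]
  have hU : ladderLimits κ f =
      ⋃ β : Iio κ, {l | ∀ n, sSup (ladderTrace f β n ∩ Iio (l n)) = l n} := by
    ext l
    simp [ladderLimits]
  rw [hU, ← Cardinal.mk_Iio_ordinal]
  exact (Cardinal.mk_iUnion_le _).trans (mul_le_mul_right (ciSup_le' fun β : Iio κ => hpi β) _)

/-! ### Non-reflection -/

variable {e : Iio omega1 → Ordinal.{0}} {T : Set (Iio omega1)}

theorem isStationary_inter_or {p : Iio omega1 → Prop} (hT : IsStationary T) :
    IsStationary {ξ ∈ T | p ξ} ∨ IsStationary {ξ ∈ T | ¬ p ξ} :=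
  (isStationary_union_iff aleph0_lt_cof_Iio_omega1.ne').1
    (hT.mono fun ξ hξ => (em (p ξ)).imp (And.intro hξ) (And.intro hξ))

theorem exists_isStationary_fiber_of_mem_image (hT : IsStationary T) {v : Iio omega1 → Ordinal.{0}}
    (hv : ∀ ξ ∈ T, v ξ ∈ e '' Iio ξ) : ∃ j, IsStationary {ξ ∈ T | v ξ = e j} := by
  choose! r hr hre using hv
  obtain ⟨j, hj⟩ := exists_isStationary_fiber_of_forall_lt aleph0_lt_cof_Iio_omega1 hT hr
  exact ⟨j, hj.mono fun ξ hξ => ⟨hξ.1, by rw [← hre ξ hξ.1, hξ.2]⟩⟩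

theorem exists_gt_of_isStationary (hT : IsStationary T) (i : Iio omega1) : ∃ ξ ∈ T, i < ξ := by
  obtain ⟨k, hk⟩ := exists_forall_lt_of_countable aleph0_lt_cof_Iio_omega1 fun _ : Unit => i
  obtain ⟨ξ, hξ, hkξ⟩ := hT (isClub_Ici k)
  exact ⟨ξ, hξ, (hk ()).trans_le hkξ⟩

theorem exists_isStationary_of_countable {ι : Type*} [Countable ι] (hT : IsStationary T)
    {p : ι → Iio omega1 → Prop} (hp : ∀ ξ ∈ T, ∃ n, p n ξ) : ∃ n, IsStationary {ξ ∈ T | p n ξ} :=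
  (isStationary_iUnion_iff_of_countable aleph0_lt_cof_Iio_omega1.ne').1
    (hT.mono fun ξ hξ => mem_iUnion.2 ((hp ξ hξ).imp fun _ => And.intro hξ))

theorem not_isStationary_of_isWitness_const {δ : Ordinal.{0}} {X : Iio omega1 → Set ℕ}
    {y : Iio omega1 → ℕ → Ordinal.{0}} (hX : ∀ ξ ∈ T, (X ξ).Nonempty)
    (hT : ∀ ξ ∈ T, IsWitness κ f (e '' Iio ξ) ξ δ (X ξ) (y ξ)) : ¬ IsStationary T := by
  intro hTst
  obtain ⟨n, hn⟩ := exists_isStationary_of_countable hTst hX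
  obtain ⟨j, hj⟩ := exists_isStationary_fiber_of_mem_image hn fun ξ hξ => (hT ξ hξ.1).mem n hξ.2
  obtain ⟨ξ₀, ⟨⟨hξ₀, hn₀⟩, hy₀⟩⟩ := hj.nonempty
  have hL := (hT ξ₀ hξ₀).isLadder n hn₀
  obtain ⟨i, hi⟩ := hL.exists_lt _ ((hT ξ₀ hξ₀).lt_apply n hn₀)
  obtain ⟨ξ₁, ⟨⟨hξ₁, hn₁⟩, hy₁⟩, hiξ⟩ := exists_gt_of_isStationary hj i
  have hle := (hT ξ₁ hξ₁).ladder_le n hn₁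
  rw [hy₁, ← hy₀] at hle
  exact (hi.trans_le (hL.monotone hiξ.le)).not_ge hle

section MinimalBound

variable {δ : Iio omega1 → Ordinal.{0}} {β : Ordinal.{0}}

theorem exists_isStationary_setOf_lt (hκ : ℵ₁ < κ.cof) (hT : IsStationary T)
    (hδ : ∀ ξ ∈ T, δ ξ < κ) (hne : ∀ d, ¬ IsStationary {ξ ∈ T | δ ξ = d}) :
    ∃ β < κ, IsStationary {ξ ∈ T | δ ξ < β} ∧ ∀ γ < β, ¬ IsStationary {ξ ∈ T | δ ξ ≤ γ} := by
  have hcard : Cardinal.lift.{0} #T < Cardinal.lift.{1} κ.cof := by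
    refine (Cardinal.lift_le.2 ((Cardinal.mk_set_le T).trans mk_Iio_omega1.le)).trans_lt ?_
    simpa using Cardinal.lift_lt.{0, 1}.2 hκ
  obtain ⟨b, hb, hδb⟩ := exists_lt_forall_lt_of_mk_lt_cof hcard fun ξ => hδ ξ.1 ξ.2
  let B : Set Ordinal.{0} := {γ | IsStationary {ξ ∈ T | δ ξ ≤ γ}}
  have hbB : IsStationary {ξ ∈ T | δ ξ ≤ b} := hT.mono fun ξ hξ => ⟨hξ, (hδb ⟨ξ, hξ⟩).le⟩
  refine ⟨sInf B, (csInf_le' (s := B) hbB).trans_lt hb, ?_,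
    fun γ hγ h => (csInf_le' (s := B) h).not_gt hγ⟩
  have hB : IsStationary {ξ ∈ T | δ ξ ≤ sInf B} := csInf_mem (s := B) ⟨b, hbB⟩
  obtain h | h := isStationary_inter_or (p := fun ξ => δ ξ = sInf B) hB
  · exact (hne _ (h.mono fun ξ hξ => ⟨hξ.1.1, hξ.2⟩)).elim
  · exact h.mono fun ξ hξ => ⟨hξ.1.1, lt_of_le_of_ne hξ.1.2 hξ.2⟩

theorem isStationary_setOf_forall_apply_lt (hT : IsStationary T)
    (hmin : ∀ γ < β, ¬ IsStationary {ξ ∈ T | δ ξ ≤ γ}) :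
    IsStationary {ξ ∈ T | ∀ j < ξ, e j < β → e j < δ ξ} := by
  refine (isStationary_inter_or hT).resolve_right fun h => ?_
  have hw : ∀ ξ ∈ {ξ ∈ T | ¬ ∀ j < ξ, e j < β → e j < δ ξ}, ∃ w ∈ e '' Iio ξ, w < β ∧ δ ξ ≤ w := by
    rintro ξ ⟨-, hξ⟩
    push Not at hξ
    obtain ⟨j, hj, hjβ, hδj⟩ := hξ
    exact ⟨_, mem_image_of_mem e hj, hjβ, hδj⟩
  choose! w hwe hwβ hδw using hw
  obtain ⟨j, hj⟩ := exists_isStationary_fiber_of_mem_image h hwe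
  obtain ⟨ξ, hξ, hwξ⟩ := hj.nonempty
  exact hmin (e j) (hwξ ▸ hwβ ξ hξ) (hj.mono fun ξ hξ => ⟨hξ.1.1, hξ.2 ▸ hδw ξ hξ.1⟩)

theorem exists_lt_apply_lt (hT : IsStationary T) (hlt : ∀ ξ ∈ T, δ ξ < β)
    (hmin : ∀ γ < β, ¬ IsStationary {ξ ∈ T | δ ξ ≤ γ})
    (hcof : ∀ ξ ∈ T, ∀ α < δ ξ, ∃ j < ξ, α ≤ e j ∧ e j < δ ξ) {z : Ordinal.{0}} (hz : z < β) :
    ∃ j, z < e j ∧ e j < β := by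
  have key : ∀ z < β, ∃ ξ ∈ T, z < δ ξ := fun z hz => by
    obtain ⟨ξ, hξ, hzξ⟩ := ((isStationary_inter_or hT).resolve_left (hmin z hz)).nonempty
    exact ⟨ξ, hξ, not_le.1 hzξ⟩
  obtain ⟨ξ, hξ, hzξ⟩ := key z hz
  obtain ⟨ξ', hξ', hzξ'⟩ := key (z + 1) ((Order.add_one_le_of_lt hzξ).trans_lt (hlt ξ hξ))
  obtain ⟨j, -, hzj, hjδ⟩ := hcof ξ' hξ' _ hzξ'
  exact ⟨j, Order.add_one_le_iff.1 hzj, hjδ.trans (hlt ξ' hξ')⟩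

theorem isLadder_ladder_of_isStationary (hT : IsStationary T) (hlt : ∀ ξ ∈ T, δ ξ < β)
    (hδ : ∀ ξ ∈ T, ∀ j < ξ, e j < β → e j < δ ξ) (he : ∀ z < β, ∃ j, z < e j ∧ e j < β) :
    IsLadder (ladder β) β := by
  classical
  let t : Iio omega1 → Ordinal.{0} := fun j => if e j < β then e j else 0
  have hlub : ∀ i, IsLUB (t '' Iic i) (sSup (t '' Iic i)) := fun i =>
    isLUB_csSup ⟨_, mem_image_of_mem t self_mem_Iic⟩ Ordinal.bddAbove_of_small
  refine IsLadder.isLadder_ladder (c := fun i => sSup (t '' Iic i))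
    ⟨fun i i' hi => ?_, fun i => ?_, fun z hz => ?_⟩
  · exact (hlub i).mono (hlub i') (image_mono (Iic_subset_Iic.2 hi))
  · obtain ⟨ξ, hξ, hiξ⟩ := exists_gt_of_isStationary hT i
    refine ((hlub i).2 ?_).trans_lt (hlt ξ hξ)
    rintro _ ⟨j, hj, rfl⟩
    by_cases hjβ : e j < β
    · simpa only [t, if_pos hjβ] using (hδ ξ hξ j (lt_of_le_of_lt hj hiξ) hjβ).le
    · simp only [t, if_neg hjβ, zero_le]
  · obtain ⟨j, hzj, hjβ⟩ := he z hz
    refine ⟨j, hzj.trans_le ?_⟩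
    simpa only [t, if_pos hjβ] using (hlub j).1 (mem_image_of_mem t self_mem_Iic)

theorem isStationary_setOf_eq_ladderSup (hT : IsStationary T) (hlt : ∀ ξ ∈ T, δ ξ < β)
    (hδ : ∀ ξ ∈ T, ∀ j < ξ, e j < β → e j < δ ξ)
    (hcof : ∀ ξ ∈ T, ∀ α < δ ξ, ∃ j < ξ, α ≤ e j ∧ e j < δ ξ)
    (he : ∀ z < β, ∃ j, z < e j ∧ e j < β) :
    IsStationary {ξ ∈ T | δ ξ = ladderSup β ξ} := by
  have hL := isLadder_ladder_of_isStationary hT hlt hδ he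
  choose G hG hGβ using fun η => he _ (hL.lt η)
  have hH : ∀ j, ∃ i, e j < β → e j < ladder β i := fun j => by
    by_cases hj : e j < β
    · exact (hL.exists_lt _ hj).imp fun i hi _ => hi
    · exact ⟨j, fun h => absurd h hj⟩
  choose H hH using hH
  refine (isStationary_inter_of_isClub aleph0_lt_cof_Iio_omega1.ne' hT
    (isClub_setOf_forall_lt_imp_lt aleph0_lt_cof_Iio_omega1 fun η => max (G η) (H η))).mono ?_
  rintro ξ ⟨hξ, hclosed⟩
  refine ⟨hξ, le_antisymm (not_lt.1 fun hsup => ?_) (Ordinal.iSup_le fun η => ?_)⟩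
  · obtain ⟨j, hj, hsupj, hjδ⟩ := hcof ξ hξ _ hsup
    have hle : ladder β (H j) + 1 ≤ ladderSup β ξ :=
      Ordinal.le_iSup (fun η : Iio ξ => ladder β η + 1)
        ⟨H j, (le_max_right _ _).trans_lt (hclosed j hj)⟩
    exact ((hH j (hjδ.trans (hlt ξ hξ))).trans (Order.add_one_le_iff.1 hle)).not_ge hsupj
  · have hGξ := (le_max_left _ _).trans_lt (hclosed η η.2)
    exact Order.add_one_le_of_lt ((hG η).trans (hδ ξ hξ _ hGξ (hGβ η)))

theorem exists_isStationary_eq_ladderSup (hκ : ℵ₁ < κ.cof) (hT : IsStationary T)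
    (hδκ : ∀ ξ ∈ T, δ ξ < κ) (hne : ∀ d, ¬ IsStationary {ξ ∈ T | δ ξ = d})
    (hcof : ∀ ξ ∈ T, ∀ α < δ ξ, ∃ j < ξ, α ≤ e j ∧ e j < δ ξ) :
    ∃ β < κ, IsStationary {ξ ∈ T | δ ξ = ladderSup β ξ} := by
  obtain ⟨β, hβ, hTβ, hmin⟩ := exists_isStationary_setOf_lt hκ hT hδκ hne
  have hmin' : ∀ γ < β, ¬ IsStationary {ξ ∈ {ξ ∈ T | δ ξ < β} | δ ξ ≤ γ} := fun γ hγ h =>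
    hmin γ hγ (h.mono fun ξ hξ => ⟨hξ.1.1, hξ.2⟩)
  have he : ∀ z < β, ∃ j, z < e j ∧ e j < β := fun z hz =>
    exists_lt_apply_lt hTβ (fun ξ hξ => hξ.2) hmin' (fun ξ hξ => hcof ξ hξ.1) hz
  refine ⟨β, hβ, (isStationary_setOf_eq_ladderSup
    (isStationary_setOf_forall_apply_lt (e := e) hTβ hmin') (fun ξ hξ => hξ.1.2) (fun ξ hξ => hξ.2)
    (fun ξ hξ => hcof ξ hξ.1.1) he).mono fun ξ hξ => ⟨hξ.1.1.1, hξ.2⟩⟩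

end MinimalBound

theorem exists_forall_isStationary_apply_eq {ι : Type*} [Countable ι] {X : Iio omega1 → Set ι}
    {y : Iio omega1 → ι → Ordinal.{0}} (hT : IsStationary T)
    (hy : ∀ ξ ∈ T, ∀ n ∈ X ξ, y ξ n ∈ e '' Iio ξ) :
    ∃ ξ ∈ T, ∀ n ∈ X ξ, IsStationary {ξ' ∈ T | n ∈ X ξ' ∧ y ξ' n = y ξ n} := by
  by_contra! hcon
  obtain ⟨n, hn⟩ := exists_isStationary_of_countable hT hcon
  obtain ⟨j, hj⟩ := exists_isStationary_fiber_of_mem_image hn fun ξ hξ => hy ξ hξ.1 n hξ.2.1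
  obtain ⟨ξ, hξ, hξj⟩ := hj.nonempty
  exact hξ.2.2 (hj.mono fun ξ' hξ' => ⟨hξ'.1.1, hξ'.1.2.1, hξ'.2.trans hξj.symm⟩)

theorem IsLadder.sSup_inter_Iio_eq {c : Iio omega1 → Ordinal.{0}} {v : Ordinal.{0}}
    (hc : IsLadder c v) {H : Set Ordinal.{0}} (hH : ∀ i, ∃ h ∈ H, c i ≤ h ∧ h < v) :
    sSup (H ∩ Iio v) = v := by
  refine le_antisymm (csSup_le' fun h hh => hh.2.le) (not_lt.1 fun hlt => ?_)
  obtain ⟨i, hi⟩ := hc.exists_lt _ hlt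
  obtain ⟨h, hhH, hih, hhv⟩ := hH i
  exact (hi.trans_le hih).not_ge (le_csSup ⟨v, fun z hz => hz.2.le⟩ ⟨hhH, hhv⟩)

theorem not_isStationary_of_forall_isWitness (hκ : ℵ₁ < κ.cof) {δ : Iio omega1 → Ordinal.{0}}
    {X : Iio omega1 → Set ℕ} {y : Iio omega1 → ℕ → Ordinal.{0}}
    (hW : ∀ ξ ∈ T, IsWitness κ f (e '' Iio ξ) ξ (δ ξ) (X ξ) (y ξ)) : ¬ IsStationary T := by
  intro hT
  have hκ0 : 0 < κ := pos_iff_ne_zero.2 fun h => by simp [h] at hκ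
  have hX : ∀ ξ ∈ T, (X ξ).Nonempty := fun ξ hξ =>
    let ⟨n, hn, _⟩ := (hW ξ hξ).exists_ne 0 ⟨0, hκ0, fun n => by simp⟩
    ⟨n, hn⟩
  obtain ⟨β, hβ, hTβ⟩ := exists_isStationary_eq_ladderSup (e := e) hκ hT (fun ξ hξ => (hW ξ hξ).lt)
    (fun d => not_isStationary_of_isWitness_const (fun ξ hξ => hX ξ hξ.1)
      fun ξ hξ => hξ.2 ▸ hW ξ hξ.1)
    (fun ξ hξ α hα => by simpa [and_assoc] using (hW ξ hξ).exists_mem α hα)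
  obtain ⟨ξ, ⟨hξ, -⟩, hst⟩ := exists_forall_isStationary_apply_eq hTβ
    fun ξ hξ => (hW ξ hξ.1).mem
  classical
  obtain ⟨n, hn, hne⟩ := (hW ξ hξ).exists_ne (fun n => if n ∈ X ξ then y ξ n else 0)
    ⟨β, hβ, fun n => by
      dsimp only
      split_ifs with hn
      · refine ((hW ξ hξ).isLadder n hn).sSup_inter_Iio_eq fun i => ?_
        obtain ⟨ξ', ⟨⟨hξ', hδ⟩, hn', hy⟩, hi⟩ := exists_gt_of_isStationary (hst n hn) i
        refine ⟨f (ladderSup β ξ') n, mem_range_self ξ', ?_⟩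
        rw [← hδ, ← hy]
        exact ⟨(((hW ξ' hξ').isLadder n hn').monotone hi.le).trans ((hW ξ' hξ').ladder_le n hn'),
          (hW ξ' hξ').lt_apply n hn'⟩
      · simp⟩
  exact hne (if_pos hn).symm

theorem not_isStationaryOmega_nonreflectingSet (hκ : ℵ₁ < κ.cof) {I : Set Ordinal.{0}}
    (hI : Iio omega1 ⊆ I) (hIc : #I = ℵ₁) :
    ¬ IsStationaryOmega I (nonreflectingSet κ f ∩ sOmega I) := by
  obtain ⟨E⟩ := Cardinal.eq.1 (mk_Iio_omega1.trans hIc.symm)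
  obtain ⟨e, rfl⟩ : ∃ e : Iio omega1 → Ordinal.{0}, range e = I :=
    ⟨Subtype.val ∘ E, by rw [range_comp, E.range_eq_univ, image_univ, Subtype.range_coe]⟩
  intro hS
  have hW : ∀ ξ ∈ {ξ | e '' Iio ξ ∈ nonreflectingSet κ f ∩ sOmega (range e) ∧
      e '' Iio ξ ∩ Iio omega1 = Iio ξ.1}, ∃ δ X y, IsWitness κ f (e '' Iio ξ) ξ δ X y := by
    rintro ξ ⟨⟨⟨-, ξ', δ, X, y, h⟩, -⟩, hξ⟩
    obtain rfl : ξ' = ξ := Subtype.ext (Iio_injective (h.inter_eq.symm.trans hξ))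
    exact ⟨δ, X, y, h⟩
  choose! δ X y hW using hW
  exact not_isStationary_of_forall_isWitness hκ hW (isStationary_image_Iio_mem hI hS)

end Nonreflecting

/-! ### A game on finite sequences -/

section Game

universe u v w

variable {α : Type u} {J : Type v} {ι : Type w}

/-- A winning strategy of the first player from position `p`. In a position `p` violating `ok` the
first player has won; otherwise he plays `j : J` and a `j`-small set `B`, and the second player
answers with `a ∈ dom j \ B`, which is put in front of `p`. -/
inductive Refutation (ok : List α → Prop) (dom : J → Set α) (small : J → Set α → Prop) :
    List α → Type (max u v)
  | not_ok {p : List α} : ¬ ok p → Refutation ok dom small p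
  | move {p : List α} (j : J) (B : Set α) : small j B →
      (∀ a ∈ dom j, a ∉ B → Refutation ok dom small (a :: p)) → Refutation ok dom small p

namespace Refutation

variable {ok : List α → Prop} {dom : J → Set α} {small : J → Set α → Prop}

theorem of_isEmpty {p : List α} (h : IsEmpty (Refutation ok dom small p)) : ok p :=
  by_contra fun hp => h.elim (not_ok hp)

theorem not_small_of_isEmpty {p : List α} (h : IsEmpty (Refutation ok dom small p)) (j : J) :
    ¬ small j {a ∈ dom j | IsEmpty (Refutation ok dom small (a :: p))} := fun hj =>
  h.elim (move j _ hj fun _ ha hb =>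
    (not_isEmpty_iff.1 fun he => hb ⟨ha, he⟩).some)

open Classical in
/-- The part of the strategy `r` that remains after the moves `p` of the second player, if these are
legal. -/
def after (r : Refutation ok dom small []) : ∀ p : List α, Option (Refutation ok dom small p)
  | [] => some r
  | a :: p =>
    match after r p with
    | some (move j B _ next) =>
      if h : a ∈ dom j ∧ a ∉ B then some (next a h.1 h.2) else none
    | _ => none

theorem exists_small_of_after (hempty : ∀ j, small j ∅) (r : Refutation ok dom small [])
    (p : List α) (j : J) : ∃ B, small j B ∧
      ∀ B' hB next, after r p = some (move j B' hB next) → B' = B := by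
  rcases after r p with _ | _ | ⟨i, B, hB, -⟩
  · exact ⟨∅, hempty j, by simp⟩
  · exact ⟨∅, hempty j, by simp⟩
  · by_cases hij : i = j
    · subst hij
      exact ⟨B, hB, by simp +contextual⟩
    · exact ⟨∅, hempty j, by simp [hij]⟩

end Refutation

variable {ok : ι → List α → Prop} {dom : J → Set α} {small : ι → J → Set α → Prop}

theorem exists_isEmpty_refutation [Countable J] (hempty : ∀ ξ j, small ξ j ∅)
    (hcov : ∀ j (B : ι → Set α), (∀ ξ, small ξ j (B ξ)) → ∃ a ∈ dom j, ∀ ξ, a ∉ B ξ)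
    (hok : ∀ P : Set (List α), P.Countable → ∃ ξ, ∀ p ∈ P, ok ξ p) :
    ∃ ξ, IsEmpty (Refutation (ok ξ) dom (small ξ) []) := by
  by_contra! hr
  choose B hB hBr using fun ξ => Refutation.exists_small_of_after (hempty ξ) (hr ξ).some
  choose a ha haB using fun p j => hcov j (fun ξ => B ξ p j) fun ξ => hB ξ p j
  let run : List J → List α := List.rec [] fun j _ p => a p j :: p
  obtain ⟨ξ, hξ⟩ := hok (range run) (countable_range run)
  have key : ∀ p (r : Refutation (ok ξ) dom (small ξ) p) σ, run σ = p →
      (hr ξ).some.after p ≠ some r := by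
    intro p r
    induction r with
    | not_ok hp => exact fun σ hσ _ => hp (hσ ▸ hξ _ (mem_range_self σ))
    | @move p j B' hB' next ih =>
      rintro σ rfl h
      obtain rfl := hBr ξ _ j B' hB' next h
      refine ih _ (ha (run σ) j) (haB (run σ) j ξ) (j :: σ) rfl ?_
      rw [Refutation.after, h]
      exact dif_pos ⟨ha (run σ) j, haB (run σ) j ξ⟩
  exact key [] _ [] rfl rfl

theorem exists_set_forall_not_small [Countable J] (hempty : ∀ ξ j, small ξ j ∅)
    (hcov : ∀ j (B : ι → Set α), (∀ ξ, small ξ j (B ξ)) → ∃ a ∈ dom j, ∀ ξ, a ∉ B ξ)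
    (hok : ∀ P : Set (List α), P.Countable → ∃ ξ, ∀ p ∈ P, ok ξ p) :
    ∃ ξ, ∃ W : Set (List α), [] ∈ W ∧
      ∀ p ∈ W, ok ξ p ∧ ∀ j, ¬ small ξ j {a ∈ dom j | a :: p ∈ W} := by
  obtain ⟨ξ, h⟩ := exists_isEmpty_refutation hempty hcov hok
  exact ⟨ξ, {p | IsEmpty (Refutation (ok ξ) dom (small ξ) p)}, h, fun p hp =>
    ⟨Refutation.of_isEmpty hp, Refutation.not_small_of_isEmpty hp⟩⟩

end Game

/-! ### Closures and clubs -/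

section Closure

variable {α : Type*} {Φ : List α → Set α} {A B M : Set α}

/-- `M` is closed under the multivalued operation `Φ` of arbitrary finite arity. -/
def IsClosedUnder (Φ : List α → Set α) (M : Set α) : Prop :=
  ∀ l : List α, (∀ a ∈ l, a ∈ M) → Φ l ⊆ M

/-- The closure of `A` under the multivalued operation `Φ`. -/
def hull (Φ : List α → Set α) (A : Set α) : Set α :=
  ⋂₀ {M | A ⊆ M ∧ IsClosedUnder Φ M}

theorem subset_hull : A ⊆ hull Φ A := subset_sInter fun _ hM => hM.1

theorem hull_subset (h : A ⊆ M) (hM : IsClosedUnder Φ M) : hull Φ A ⊆ M :=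
  sInter_subset_of_mem ⟨h, hM⟩

theorem isClosedUnder_hull : IsClosedUnder Φ (hull Φ A) := fun l hl =>
  subset_sInter fun _ hM => hM.2 l fun a ha => hl a ha _ hM

theorem hull_mono (h : A ⊆ B) : hull Φ A ⊆ hull Φ B :=
  hull_subset (h.trans subset_hull) isClosedUnder_hull

theorem exists_forall_mem_list_of_directed {ι : Type*} [Nonempty ι] {D : ι → Set α}
    (hD : Directed (· ⊆ ·) D) {l : List α} (hl : ∀ a ∈ l, a ∈ ⋃ i, D i) :
    ∃ i, ∀ a ∈ l, a ∈ D i := by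
  classical
  obtain ⟨i, hi⟩ := hD.exists_mem_subset_of_finset_subset_biUnion (s := l.toFinset)
    fun a ha => hl a (by simpa using ha)
  exact ⟨i, fun a ha => hi (by simpa using ha)⟩

theorem hull_iUnion_subset {ι : Type*} [Nonempty ι] {D : ι → Set α} (hD : Directed (· ⊆ ·) D) :
    hull Φ (⋃ i, D i) ⊆ ⋃ i, hull Φ (D i) := by
  refine hull_subset (iUnion_mono fun i => subset_hull) fun l hl => ?_
  obtain ⟨i, hi⟩ := exists_forall_mem_list_of_directed (D := fun i => hull Φ (D i))
    (fun i j => (hD i j).imp fun k hk => ⟨hull_mono hk.1, hull_mono hk.2⟩) hl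
  exact (isClosedUnder_hull l hi).trans (subset_iUnion (fun i => hull Φ (D i)) i)

theorem countable_setOf_list_forall_mem (h : A.Countable) :
    {l : List α | ∀ a ∈ l, a ∈ A}.Countable := by
  have := h.to_subtype
  rw [← Set.range_list_map_coe]
  exact countable_range _

theorem countable_hull (hΦ : ∀ l, (Φ l).Countable) (hA : A.Countable) :
    (hull Φ A).Countable := by
  let step : Set α → Set α := fun B => B ∪ ⋃ l ∈ {l : List α | ∀ a ∈ l, a ∈ B}, Φ l
  let it : ℕ → Set α := fun k => step^[k] A
  have hsucc : ∀ k, it (k + 1) = step (it k) := fun k => Function.iterate_succ_apply' step k A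
  have hmono : Monotone it := monotone_nat_of_le_succ fun k => hsucc k ▸ subset_union_left
  have hcount : ∀ k, (it k).Countable := fun k => by
    induction k with
    | zero => exact hA
    | succ k ih =>
      rw [hsucc]
      exact ih.union ((countable_setOf_list_forall_mem ih).biUnion fun l _ => hΦ l)
  refine (countable_iUnion hcount).mono (hull_subset (subset_iUnion it 0) fun l hl => ?_)
  obtain ⟨k, hk⟩ := exists_forall_mem_list_of_directed hmono.directed_le hl
  refine Subset.trans ?_ (subset_iUnion it (k + 1))
  rw [hsucc]
  exact (subset_biUnion_of_mem (s := {l | ∀ a ∈ l, a ∈ it k}) (u := Φ) hk).trans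
    subset_union_right

theorem exists_forall_isClosedUnder_mem {K : Set α} (hK : K.Infinite) {C : Set (Set α)}
    (hC : IsClubOmega K C) :
    ∃ Φ : List α → Set α, (∀ l, (Φ l).Countable) ∧ (∀ l, Φ l ⊆ K) ∧
      ∀ M ⊆ K, M.Countable → IsClosedUnder Φ M → M ∈ C := by
  obtain ⟨hCK, hcof, hunion⟩ := hC
  have hnext : ∀ (x : C) (a : α), ∃ y : C, x.1 ⊆ y ∧ (a ∈ K → a ∈ y.1) := fun x a => by
    obtain ⟨hxK, hxc, hxi⟩ := hCK x.2
    by_cases ha : a ∈ K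
    · obtain ⟨y, hy, hxy⟩ := hcof (insert a x)
        ⟨insert_subset ha hxK, hxc.insert a, hxi.mono (subset_insert a x)⟩
      exact ⟨⟨y, hy⟩, (subset_insert a x).trans hxy, fun _ => hxy (mem_insert a x)⟩
    · exact ⟨x, Subset.rfl, fun h => (ha h).elim⟩
  choose next hnext hmem using hnext
  obtain ⟨x, hxK, hxc, hxi⟩ := hK.exists_subset_countable_infinite
  obtain ⟨x₀, hx₀, -⟩ := hcof x ⟨hxK, hxc, hxi⟩
  let Φ : List α → C := List.foldl next ⟨x₀, hx₀⟩
  refine ⟨fun l => Φ l, fun l => (hCK (Φ l).2).2.1, fun l => (hCK (Φ l).2).1, fun M hMK hM hΦ => ?_⟩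
  have hne : M.Nonempty := (hCK hx₀).2.2.nonempty.mono (hΦ [] (by simp))
  obtain ⟨a, rfl⟩ := hM.exists_eq_range hne
  let it : ℕ → C := fun k => Φ ((List.range k).map a)
  have hsucc : ∀ k, it (k + 1) = next (it k) (a k) := fun k => by simp [it, Φ, List.range_succ]
  have hit : range a = ⋃ k, (it k : Set α) := by
    refine Subset.antisymm ?_ (iUnion_subset fun k => hΦ _ (by simp))
    rintro _ ⟨k, rfl⟩
    refine mem_iUnion.2 ⟨k + 1, ?_⟩
    rw [hsucc]
    exact hmem _ _ (hMK (mem_range_self k))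
  rw [hit]
  exact hunion _ (fun k => (it k).2) fun k => hsucc k ▸ hnext _ _

end Closure

theorem exists_forall_hull_inter_subset {Φ : List Ordinal.{0} → Set Ordinal.{0}}
    (hΦ : ∀ l, (Φ l).Countable) {P : Set (List Ordinal.{0})} (hP : P.Countable) :
    ∃ ξ : Iio omega1, ∀ p ∈ P, hull Φ (Iio ξ.1 ∪ {a | a ∈ p}) ∩ Iio omega1 ⊆ Iio ξ.1 := by
  let A : Set Ordinal.{0} := ⋃ p ∈ P, {a | a ∈ p}
  have hA : A.Countable := hP.biUnion fun p _ => (List.finite_toSet p).countable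
  have hb : ∀ ζ : Iio omega1, ∃ b : Iio omega1, ζ < b ∧
      ∀ z ∈ hull Φ (Iio ζ.1 ∪ A), z < omega1 → z < b := fun ζ => by
    have hζ := countable_Iio_of_lt_omega1 ζ.2
    have hc : (Subtype.val ⁻¹' hull Φ (Iio ζ.1 ∪ A) : Set (Iio omega1)).Countable :=
      (countable_hull hΦ (hζ.union hA)).preimage Subtype.val_injective
    have := (hc.insert ζ).to_subtype
    obtain ⟨b, hb⟩ := exists_forall_lt_of_countable aleph0_lt_cof_Iio_omega1
      fun z : (insert ζ (Subtype.val ⁻¹' hull Φ (Iio ζ.1 ∪ A)) : Set (Iio omega1)) => z.1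
    exact ⟨b, hb ⟨ζ, mem_insert _ _⟩, fun z hz hzω => hb ⟨⟨z, hzω⟩, mem_insert_of_mem _ hz⟩⟩
  choose b hb hbz using hb
  have h₀ : 0 < omega1 := lt_omega1_iff.2 (by simp)
  obtain ⟨ξ, hξ, hξ₀⟩ := (isClub_setOf_forall_lt_imp_lt aleph0_lt_cof_Iio_omega1 b).isCofinal
    (b ⟨0, h₀⟩)
  have : Nonempty (Iio ξ) := ⟨_, (hb _).trans_le hξ₀⟩
  refine ⟨ξ, fun p hp z ⟨hz, hzω⟩ => ?_⟩
  have hsub : Iio ξ.1 ∪ {a | a ∈ p} ⊆ ⋃ i : Iio ξ, (Iio i.1.1 ∪ A) := by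
    rintro x (hx | hx)
    · have hxω : x < omega1 := lt_trans hx ξ.2
      exact mem_iUnion.2 ⟨⟨b ⟨x, hxω⟩, hξ _ hx⟩, .inl (hb ⟨x, hxω⟩)⟩
    · exact mem_iUnion.2 ⟨Classical.arbitrary _, .inr (mem_biUnion hp hx)⟩
  have hmono : Monotone fun i : Iio ξ => Iio i.1.1 ∪ A := fun i j hij =>
    union_subset_union_left A (Iio_subset_Iio hij)
  obtain ⟨i, hi⟩ := mem_iUnion.1 (hull_iUnion_subset hmono.directed_le (hull_mono hsub hz))
  exact (hbz i z hi hzω).trans (hξ i i.2)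

/-! ### Ladders avoiding thin sets -/

section Thin

universe u v

theorem exists_seq_forall_lt_imp_apply_lt {ι : Type v} [LinearOrder ι] [WellFoundedLT ι]
    {D : Type u} [LinearOrder D]
    (h : ∀ i : ι, Cardinal.lift.{u} #(Iio i) < Cardinal.lift.{v} (Order.cof D)) (F : D → D) :
    ∃ c : ι → D, ∀ j i, j < i → F (c j) < c i := by
  have hnext : ∀ i (p : ∀ j < i, D), ∃ b, ∀ j : Iio i, F (p j j.2) < b := fun i p =>
    exists_forall_lt_of_mk_lt_cof (h i) _
  choose next hnext using hnext
  refine ⟨wellFounded_lt.fix next, fun j i hji => ?_⟩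
  rw [wellFounded_lt.fix_eq next i]
  exact hnext i (fun c _ => wellFounded_lt.fix next c) ⟨j, hji⟩

/-- The sets that may be forbidden to a player choosing an ordinal below `o`: below any bound on the
`ξ`-th step of the ladder, the ordinals in `B` are bounded in `o`. -/
def IsThin (o : Ordinal.{0}) (ξ : Iio omega1) (B : Set Ordinal.{0}) : Prop :=
  ∀ ε < o, ∃ b < o, ∀ y ∈ B, ladder y ξ ≤ ε → y ≤ b

theorem exists_isLadder_forall_notMem {o : Ordinal.{0}} (ho : ℵ₁ < o.cof)
    {B : Iio omega1 → Set Ordinal.{0}} (hB : ∀ ξ, IsThin o ξ (B ξ)) :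
    ∃ y < o, IsLadder (ladder y) y ∧ ∀ ξ, y ∉ B ξ := by
  have hcof : #(Iio omega1) < Order.cof (Iio o) := by
    have := lift_lt_cof_Iio.2 ho
    rwa [Cardinal.lift_aleph, Ordinal.lift_one, ← mk_Iio_omega1] at this
  choose b hbo hb using hB
  have hF : ∀ ε : Iio o, ∃ c : Iio o, ε ≤ c ∧ ∀ ξ, b ξ ε ε.2 < c := fun ε => by
    obtain ⟨c, hc⟩ := exists_forall_lt_of_mk_lt_cof (Cardinal.lift_lt.2 hcof)
      fun ξ => (⟨b ξ ε ε.2, hbo ξ ε ε.2⟩ : Iio o)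
    exact ⟨max ε c, le_max_left ε c, fun ξ => lt_max_of_lt_right (hc ξ)⟩
  choose F hεF hbF using hF
  obtain ⟨c, hc⟩ := exists_seq_forall_lt_imp_apply_lt (ι := Iio omega1)
    (fun i => Cardinal.lift_lt.2 ((Cardinal.mk_set_le _).trans_lt hcof)) F
  obtain ⟨d, hd⟩ := exists_forall_lt_of_mk_lt_cof (Cardinal.lift_lt.2 hcof) c
  set y : Ordinal.{0} := ⨆ i, (c i).1
  have hyo : y < o := (Ordinal.iSup_le fun i => (hd i).le).trans_lt d.2
  have hle : ∀ i, F (c i) < y := fun i => by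
    obtain ⟨j, hj⟩ := exists_forall_lt_of_countable aleph0_lt_cof_Iio_omega1 fun _ : Unit => i
    exact lt_of_lt_of_le (hc i j (hj ())) (Ordinal.le_iSup (fun i => (c i).1) j)
  have hlad : IsLadder (fun i => (c i).1) y :=
    ⟨fun i j hij => hij.eq_or_lt.elim (fun h => h ▸ le_rfl) fun h => (hεF _).trans (hc i j h).le,
      fun i => lt_of_le_of_lt (hεF (c i)) (hle i), fun z hz => Ordinal.lt_iSup_iff.1 hz⟩
  refine ⟨y, hyo, hlad.isLadder_ladder, fun ξ hyB => ?_⟩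
  obtain ⟨i, hi⟩ := hlad.exists_lt _ (hlad.isLadder_ladder.lt ξ)
  exact (hb ξ (c i) (c i).2 y hyB hi.le).not_gt ((hbF (c i) ξ).trans (hle i))

end Thin

/-! ### Stationarity of the non-reflecting set -/

section Rich

/-- A tree `W` of positions in which the second player has not lost the game for the club generated
by `Φ`: the closure of every position adds no countable ordinals to `ξ`, positions can be
prolonged by arbitrarily large ordinals below `κ`, and also by arbitrarily large ordinals below
`g n` whose ladders are bounded at `ξ`. -/
structure IsRich (κ : Ordinal.{0}) (g : ℕ → Ordinal.{0}) (Φ : List Ordinal.{0} → Set Ordinal.{0})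
    (ξ : Iio omega1) (W : Set (List Ordinal.{0})) : Prop where
  nil_mem : [] ∈ W
  hull_inter_subset : ∀ p ∈ W, hull Φ (Iio ξ.1 ∪ {a | a ∈ p}) ∩ Iio omega1 ⊆ Iio ξ.1
  exists_cons_mem : ∀ p ∈ W, ∀ b < κ, ∃ a < κ, b ≤ a ∧ a :: p ∈ W
  exists_ladder_cons_mem : ∀ p ∈ W, ∀ n, ∃ ε < g n, ∀ b < g n, ∃ y < g n,
    b < y ∧ IsLadder (ladder y) y ∧ ladder y ξ ≤ ε ∧ y :: p ∈ W

variable {κ δ : Ordinal.{0}} {g : ℕ → Ordinal.{0}} {f : Ordinal.{0} → ℕ → Ordinal.{0}}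
  {Φ : List Ordinal.{0} → Set Ordinal.{0}} {ξ : Iio omega1} {W : Set (List Ordinal.{0})}

/-- The moves of the second player: in the round `none` an ordinal below `κ`, in the round `some n`
a limit of a ladder below `g n`. -/
def moves (κ : Ordinal.{0}) (g : ℕ → Ordinal.{0}) : Option ℕ → Set Ordinal.{0}
  | none => Iio κ
  | some n => {y | y < g n ∧ IsLadder (ladder y) y}

/-- The sets of moves the first player may forbid: bounded ones in the round `none`, thin ones in
the round `some n`. -/
def IsForbiddable (κ : Ordinal.{0}) (g : ℕ → Ordinal.{0}) (ξ : Iio omega1) :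
    Option ℕ → Set Ordinal.{0} → Prop
  | none, B => ∃ b < κ, ∀ a ∈ B, a < b
  | some n, B => IsThin (g n) ξ B

theorem isForbiddable_empty (hκ : κ ≠ 0) (hg : ∀ n, g n ≠ 0) (j : Option ℕ) :
    IsForbiddable κ g ξ j ∅ := by
  rcases j with _ | n
  · exact ⟨0, pos_iff_ne_zero.2 hκ, fun _ h => h.elim⟩
  · exact fun ε _ => ⟨0, pos_iff_ne_zero.2 (hg n), fun _ h => h.elim⟩

theorem exists_mem_moves_forall_notMem (hκ : ℵ₁ < κ.cof) (hg : ∀ n, ℵ₁ < (g n).cof) (j : Option ℕ)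
    {B : Iio omega1 → Set Ordinal.{0}} (hB : ∀ ξ, IsForbiddable κ g ξ j (B ξ)) :
    ∃ a ∈ moves κ g j, ∀ ξ, a ∉ B ξ := by
  rcases j with _ | n
  · choose b hb hBb using hB
    obtain ⟨c, hc, hbc⟩ := exists_lt_forall_lt_of_mk_lt_cof (o := κ)
      (by simpa only [mk_Iio_omega1, Cardinal.lift_aleph, Ordinal.lift_one]
        using Cardinal.lift_lt.{0, 1}.2 hκ) hb
    exact ⟨c, hc, fun ξ hcB => (hBb ξ c hcB).not_gt (hbc ξ)⟩
  · obtain ⟨y, hy, hlad, hyB⟩ := exists_isLadder_forall_notMem (hg n) hB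
    exact ⟨y, ⟨hy, hlad⟩, hyB⟩

theorem exists_isRich (hκ : ℵ₁ < κ.cof) (hg : ∀ n, ℵ₁ < (g n).cof) (hΦ : ∀ l, (Φ l).Countable) :
    ∃ ξ W, IsRich κ g Φ ξ W := by
  have ne_zero : ∀ o : Ordinal.{0}, ℵ₁ < o.cof → o ≠ 0 := by
    rintro o h rfl
    exact not_lt_zero (Ordinal.cof_zero ▸ h)
  obtain ⟨ξ, W, hnil, hW⟩ := exists_set_forall_not_small
    (dom := moves κ g) (small := IsForbiddable κ g)
    (ok := fun (ξ : Iio omega1) (p : List Ordinal.{0}) =>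
      hull Φ (Iio ξ.1 ∪ {a | a ∈ p}) ∩ Iio omega1 ⊆ Iio ξ.1)
    (fun ξ j => isForbiddable_empty (ξ := ξ) (ne_zero _ hκ) (fun n => ne_zero _ (hg n)) j)
    (fun j _ hB => exists_mem_moves_forall_notMem hκ hg j hB)
    (fun P hP => exists_forall_hull_inter_subset hΦ hP)
  refine ⟨ξ, W, hnil, fun p hp => (hW p hp).1, fun p hp b hb => ?_, fun p hp n => ?_⟩
  · by_contra! hcon
    exact (hW p hp).2 none ⟨b, hb, fun a ha => not_le.1 fun hba => hcon a ha.1 hba ha.2⟩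
  · by_contra! hcon
    refine (hW p hp).2 (some n) fun ε hε => ?_
    obtain ⟨b, hb, hy⟩ := hcon ε hε
    exact ⟨b, hb, fun y hyW hyε => not_lt.1 fun hby => hy y hyW.1.1 hby hyW.1.2 hyε hyW.2⟩

theorem mk_setOf_list_forall_lt_le {b : Ordinal.{0}} {lam : Cardinal.{0}} (hlam : ℵ₀ ≤ lam)
    (hb : b.card ≤ lam) : #{l : List Ordinal.{0} | ∀ a ∈ l, a < b} ≤ Cardinal.lift.{1} lam := by
  have hr : {l : List Ordinal.{0} | ∀ a ∈ l, a < b} =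
      range (List.map ((↑) : Iio b → Ordinal)) := by
    rw [Set.range_list_map_coe]
    rfl
  rw [hr]
  refine Cardinal.mk_range_le.trans ((Cardinal.mk_list_le_max _).trans ?_)
  rw [Cardinal.mk_Iio_ordinal]
  exact max_le (Cardinal.aleph0_le_lift.2 hlam) (Cardinal.lift_le.2 hb)

theorem exists_gt_forall_list_lt {lam : Cardinal.{0}} (hlam : ℵ₀ ≤ lam)
    {F : List Ordinal.{0} → Ordinal.{0}}
    (hF : ∀ l, (∀ a ∈ l, a < (Order.succ lam).ord) → F l < (Order.succ lam).ord) {b : Ordinal.{0}}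
    (hb : b < (Order.succ lam).ord) :
    ∃ c < (Order.succ lam).ord, b < c ∧ ∀ l, (∀ a ∈ l, a < b) → F l < c := by
  have hcard : Cardinal.lift.{0} #{l : List Ordinal.{0} | ∀ a ∈ l, a < b} <
      Cardinal.lift.{1} (Order.succ lam).ord.cof := by
    rw [(isRegular_succ hlam).cof_ord, Cardinal.lift_uzero]
    refine (mk_setOf_list_forall_lt_le hlam ?_).trans_lt (Cardinal.lift_lt.2 (Order.lt_succ lam))
    exact Order.lt_succ_iff.1 (Cardinal.lt_ord.1 hb)
  obtain ⟨c, hc, hFc⟩ := exists_lt_forall_lt_of_mk_lt_cof hcard (φ := fun l => max b (F l))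
    fun l => max_lt hb (hF l fun a ha => (l.2 a ha).trans hb)
  exact ⟨c, hc, (max_lt_iff.1 (hFc ⟨[], by simp⟩)).1, fun l hl => (max_lt_iff.1 (hFc ⟨l, hl⟩)).2⟩

theorem exists_gt_closed_of_countable_cof {lam : Cardinal.{0}} (hlam : ℵ₀ ≤ lam)
    {F : List Ordinal.{0} → Ordinal.{0}}
    (hF : ∀ l, (∀ a ∈ l, a < (Order.succ lam).ord) → F l < (Order.succ lam).ord) {b : Ordinal.{0}}
    (hb : b < (Order.succ lam).ord) :
    ∃ δ < (Order.succ lam).ord, b < δ ∧ (∀ l, (∀ a ∈ l, a < δ) → F l < δ) ∧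
      ∃ d : ℕ → Ordinal.{0}, Monotone d ∧ (∀ k, d k < δ) ∧ ∀ z < δ, ∃ k, z < d k := by
  choose next hnext hlt hFlt using fun b hb => exists_gt_forall_list_lt hlam hF (b := b) hb
  let D : ℕ → Iio (Order.succ lam).ord := fun k => (fun b => ⟨next b b.2, hnext b b.2⟩)^[k] ⟨b, hb⟩
  have hD : ∀ k, (D (k + 1)).1 = next (D k) (D k).2 := fun k =>
    congrArg Subtype.val (Function.iterate_succ_apply' _ k _)
  have hsucc : ∀ k, (D k).1 < D (k + 1) := fun k => hD k ▸ hlt _ _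
  have hmono : Monotone fun k => (D k).1 := monotone_nat_of_le_succ fun k => (hsucc k).le
  obtain ⟨c, hc, hDc⟩ := exists_lt_forall_lt_of_countable (o := (Order.succ lam).ord)
    (by rw [(isRegular_succ hlam).cof_ord]; exact Order.lt_succ_of_le hlam) fun k => (D k).2
  set δ : Ordinal.{0} := ⨆ k, (D k).1
  have hDδ : ∀ k, (D k).1 < δ := fun k =>
    (hsucc k).trans_le (Ordinal.le_iSup (fun k => (D k).1) (k + 1))
  have hδ : ∀ z < δ, ∃ k, z < D k := fun z hz => Ordinal.lt_iSup_iff.1 hz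
  refine ⟨δ, (Ordinal.iSup_le fun k => (hDc k).le).trans_lt hc, hDδ 0, fun l hl => ?_,
    fun k => D k, hmono, hDδ, hδ⟩
  obtain ⟨k, hk⟩ := exists_forall_mem_list_of_directed (D := fun k => Iio (D k).1)
    (Monotone.directed_le fun i j hij => Iio_subset_Iio (hmono hij))
    fun a ha => mem_iUnion.2 (hδ a (hl a ha))
  exact ((hFlt _ _ l hk).trans_eq (hD k).symm).trans (hDδ (k + 1))

theorem exists_injective_forall_mem {L : Type} {o : Ordinal.{0}} (hL : #L < o.cof)
    {Y : Set Ordinal.{0}} (hYo : ∀ y ∈ Y, y < o) (hY : ∀ b < o, ∃ y ∈ Y, b < y) :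
    ∃ i : L → Ordinal.{0}, Function.Injective i ∧ ∀ x, i x ∈ Y := by
  have hcard : Cardinal.lift.{1} o.cof ≤ #Y := not_lt.1 fun h => by
    obtain ⟨b, hb, hYb⟩ := exists_lt_forall_lt_of_mk_lt_cof (o := o)
      ((Cardinal.lift_id' #Y).trans_lt h) (φ := fun y : Y => (y : Ordinal)) fun y => hYo y y.2
    obtain ⟨y, hy, hby⟩ := hY b hb
    exact (hYb ⟨y, hy⟩).not_gt hby
  obtain ⟨e⟩ := Cardinal.lift_mk_le'.1
    ((Cardinal.lift_le.2 hL.le).trans (hcard.trans (Cardinal.lift_id' #Y).ge))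
  exact ⟨fun x => e x, Subtype.val_injective.comp e.injective, fun x => (e x).2⟩

end Rich

section Run

open Filter

universe u

theorem exists_labelling {A : Type u} {lam : Cardinal.{u}} (hA : #A ≤ lam) {mu : ℕ → Cardinal.{u}}
    (hmu : ∀ n, ℵ₀ ≤ mu n) (hmono : Monotone mu) (hcof : ∀ ν < lam, ∃ n, ν < mu n) :
    ∃ (L : ℕ → Type u) (lab : (ℕ → A) → ∀ n, L n), (∀ n, #(L n) ≤ mu n) ∧
      ∀ s s', (∃ᶠ n in atTop, lab s n = lab s' n) → s = s' := by
  classical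
  obtain ⟨r, hr⟩ := exists_rank (Cardinal.lift_le.2 hA) hmono hcof
  refine ⟨fun n => Fin n → Option {a // r a ≤ n},
    fun s n i => if h : r (s i) ≤ n then some ⟨s i, h⟩ else none, fun n => ?_, fun s s' h => ?_⟩
  · have hopt : #(Option {a // r a ≤ n}) ≤ mu n := by
      rw [Cardinal.mk_option]
      exact Cardinal.add_le_of_le (hmu n) (Cardinal.lift_le.1 (hr n))
        (Cardinal.one_le_aleph0.trans (hmu n))
    calc #(Fin n → Option {a // r a ≤ n}) = #(Option {a // r a ≤ n}) ^ n := by simp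
      _ ≤ mu n ^ n := Cardinal.power_le_power_right hopt
      _ ≤ mu n := Cardinal.power_nat_le (hmu n)
  · funext i
    obtain ⟨n, hn, heq⟩ := frequently_atTop.1 h (max (i + 1) (max (r (s i)) (r (s' i))))
    simp only [max_le_iff] at hn
    simpa [hn.2.1, hn.2.2] using congrFun heq ⟨i, hn.1⟩

variable {Q β : Type*} {L : ℕ → Type*} (m : Q → ℕ) (next : ∀ t, L (m t) → Q) (t₀ : Q)

/-- The states of an automaton that reads, in state `t`, the letter of `s` with number `m t`. -/
def run (s : ∀ n, L n) : ℕ → Q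
  | 0 => t₀
  | k + 1 => next (run s k) (s (m (run s k)))

variable {m next t₀} {val : ∀ t, L (m t) → β} {l : ℕ → β} {s s' : ∀ n, L n}

theorem run_eq_run (hval : ∀ t, Function.Injective (val t))
    (h : ∀ k, val (run m next t₀ s k) (s _) = l (m (run m next t₀ s k)))
    (h' : ∀ k, val (run m next t₀ s' k) (s' _) = l (m (run m next t₀ s' k))) (k : ℕ) :
    run m next t₀ s k = run m next t₀ s' k := by
  induction k with
  | zero => rfl
  | succ k ih =>
    have hk := h' k
    rw [← ih] at hk
    rw [run, run, ← ih, hval _ ((h k).trans hk.symm)]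

theorem frequently_eq_of_run (hm : StrictMono fun k => m (run m next t₀ s k))
    (hval : ∀ t, Function.Injective (val t))
    (h : ∀ k, val (run m next t₀ s k) (s _) = l (m (run m next t₀ s k)))
    (h' : ∀ k, val (run m next t₀ s' k) (s' _) = l (m (run m next t₀ s' k))) :
    ∃ᶠ n in atTop, s n = s' n := by
  refine hm.tendsto_atTop.frequently (Frequently.of_forall fun k => ?_)
  have hk := h' k
  rw [← run_eq_run hval h h' k] at hk
  exact hval _ ((h k).trans hk.symm)

end Run

section Rich

open Filter

variable {κ δ : Ordinal.{0}} {g : ℕ → Ordinal.{0}} {f : Ordinal.{0} → ℕ → Ordinal.{0}}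
  {Φ : List Ordinal.{0} → Set Ordinal.{0}} {ξ : Iio omega1} {W : Set (List Ordinal.{0})}

/-- The ordinals that prolong the position `p` in `W` and separate `γ` from the `ξ`-th step of their
ladder. -/
def separators (ξ : Iio omega1) (W : Set (List Ordinal.{0})) (γ : Ordinal.{0})
    (p : List Ordinal.{0}) : Set Ordinal.{0} :=
  {y | IsLadder (ladder y) y ∧ ladder y ξ ≤ γ ∧ γ < y ∧ y :: p ∈ W}

theorem IsRich.exists_forall_frequently_injective (hW : IsRich κ g Φ ξ W) (hf : IsWeakScale κ f g)
    {L : ℕ → Type} (hL : ∀ m, #(L m) < (g m).cof) {p : List Ordinal.{0}} (hp : p ∈ W) :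
    ∃ α < κ, ∀ δ ∈ Ico α κ, ∃ᶠ m in atTop, ∃ i : L m → Ordinal.{0}, Function.Injective i ∧
      ∀ x, i x < g m ∧ i x ∈ separators ξ W (f δ m) p := by
  choose ε hεg hε using hW.exists_ladder_cons_mem p hp
  obtain ⟨α, hα, hfα⟩ := hf ε hεg
  refine ⟨α, hα, fun δ hδ => (hfα δ hδ).mono fun m ⟨hεf, hfg⟩ => ?_⟩
  refine exists_injective_forall_mem (hL m) (Y := {y | y < g m ∧ y ∈ separators ξ W (f δ m) p})
    (fun y hy => hy.1) fun b hb => ?_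
  obtain ⟨y, hyg, hby, hlad, hle, hyW⟩ := hε m (max b (f δ m)) (max_lt hb hfg)
  exact ⟨y, ⟨hyg, hlad, hle.trans hεf, (le_max_right _ _).trans_lt hby, hyW⟩,
    (le_max_left _ _).trans_lt hby⟩

theorem exists_hull_subset_Iio (hκ : ℵ₁ < κ.cof) (hΦ : ∀ l, (Φ l).Countable)
    (hΦκ : ∀ l, Φ l ⊆ Iio κ) (ξ : Iio omega1) {l : List Ordinal.{0}} (hl : ∀ a ∈ l, a < κ) :
    ∃ b < κ, hull Φ (Iio ξ.1 ∪ {a | a ∈ l}) ⊆ Iio b := by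
  have hω : omega1 ≤ κ := not_lt.1 fun h =>
    (Cardinal.aleph0_lt_aleph_one.trans hκ).not_ge
      ((Ordinal.cof_le_card κ).trans (lt_omega1_iff.1 h))
  have hsub : Iio ξ.1 ∪ {a | a ∈ l} ⊆ Iio κ := union_subset (Iio_subset_Iio (ξ.2.le.trans hω)) hl
  have := (countable_hull hΦ ((countable_Iio_of_lt_omega1 ξ.2).union
    (List.finite_toSet l).countable)).to_subtype
  obtain ⟨b, hb, h⟩ := exists_lt_forall_lt_of_countable (o := κ)
    (Cardinal.aleph0_lt_aleph_one.trans hκ)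
    (φ := fun z : hull Φ (Iio ξ.1 ∪ {a | a ∈ l}) => (z : Ordinal))
    fun z => hull_subset hsub (fun l _ => hΦκ l) z.2
  exact ⟨b, hb, fun z hz => h ⟨z, hz⟩⟩

theorem IsRich.exists_bound (hW : IsRich κ g Φ ξ W) (hκ : ℵ₁ < κ.cof)
    (hΦ : ∀ l, (Φ l).Countable) (hΦκ : ∀ l, Φ l ⊆ Iio κ) (hf : IsWeakScale κ f g)
    {L : ℕ → Type} (hL : ∀ m, #(L m) < (g m).cof) {l : List Ordinal.{0}} (hl : ∀ a ∈ l, a < κ) :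
    ∃ c < κ, hull Φ (Iio ξ.1 ∪ {a | a ∈ l}) ⊆ Iio c ∧
      (l ∈ W → ∀ δ ∈ Ico c κ, ∃ᶠ m in atTop, ∃ i : L m → Ordinal.{0}, Function.Injective i ∧
        ∀ x, i x < g m ∧ i x ∈ separators ξ W (f δ m) l) ∧
      ∀ b p, l = b :: p → p ∈ W → ∃ a ≤ c, b ≤ a ∧ a :: p ∈ W := by
  obtain ⟨b₁, hb₁, hhull⟩ := exists_hull_subset_Iio hκ hΦ hΦκ ξ hl
  obtain ⟨b₂, hb₂, hinj⟩ : ∃ b₂ < κ, l ∈ W → ∀ δ ∈ Ico b₂ κ, ∃ᶠ m in atTop,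
      ∃ i : L m → Ordinal.{0}, Function.Injective i ∧
        ∀ x, i x < g m ∧ i x ∈ separators ξ W (f δ m) l := by
    by_cases hlW : l ∈ W
    · obtain ⟨α, hα, h⟩ := hW.exists_forall_frequently_injective hf hL hlW
      exact ⟨α, hα, fun _ => h⟩
    · exact ⟨b₁, hb₁, fun h => (hlW h).elim⟩
  obtain ⟨b₃, hb₃, hcons⟩ : ∃ b₃ < κ, ∀ b p, l = b :: p → p ∈ W → ∃ a ≤ b₃, b ≤ a ∧ a :: p ∈ W := by
    rcases l with _ | ⟨b, p⟩
    · exact ⟨b₁, hb₁, by simp⟩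
    · by_cases hp : p ∈ W
      · obtain ⟨a, ha, hba, haW⟩ := hW.exists_cons_mem p hp b (hl b (by simp))
        refine ⟨a, ha, ?_⟩
        rintro _ _ ⟨⟩ -
        exact ⟨a, le_rfl, hba, haW⟩
      · refine ⟨b₁, hb₁, ?_⟩
        rintro _ _ ⟨⟩ h
        exact (hp h).elim
  refine ⟨max b₁ (max b₂ b₃), max_lt hb₁ (max_lt hb₂ hb₃),
    hhull.trans (Iio_subset_Iio (le_max_left _ _)), fun hlW δ hδ => hinj hlW δ ⟨?_, hδ.2⟩,
    fun b p h hp => (hcons b p h hp).imp fun a ha => ⟨ha.1.trans ?_, ha.2⟩⟩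
  · exact (le_max_left _ _).trans ((le_max_right _ _).trans hδ.1)
  · exact (le_max_right _ _).trans (le_max_right _ _)

/-- One round of the construction below `δ`: every position prolongs by an ordinal above `d N` and
then, for some `m ≥ N`, by `#(L m)` different separators of `f δ m`. -/
def IsProlongable (f : Ordinal.{0} → ℕ → Ordinal.{0}) (ξ : Iio omega1)
    (W : Set (List Ordinal.{0})) (L : ℕ → Type) (δ : Ordinal.{0}) (d : ℕ → Ordinal.{0}) : Prop :=
  ∀ p ∈ W, (∀ a ∈ p, a < δ) → ∀ N, ∃ a < δ, d N ≤ a ∧ ∃ m ≥ N, ∃ i : L m → Ordinal.{0},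
    Function.Injective i ∧ ∀ x, i x < δ ∧ i x ∈ separators ξ W (f δ m) (a :: p)

theorem IsRich.exists_isProlongable {lam : Cardinal.{0}}
    (hW : IsRich (Order.succ lam).ord g Φ ξ W) (hlam : ℵ₁ ≤ lam) (hΦ : ∀ l, (Φ l).Countable)
    (hΦκ : ∀ l, Φ l ⊆ Iio (Order.succ lam).ord) (hf : IsWeakScale (Order.succ lam).ord f g)
    (hg : ∀ m, g m < lam.ord) {L : ℕ → Type} (hL : ∀ m, #(L m) < (g m).cof) :
    ∃ δ < (Order.succ lam).ord,
      (∀ p : List Ordinal.{0}, (∀ a ∈ p, a < δ) → hull Φ (Iio ξ.1 ∪ {a | a ∈ p}) ⊆ Iio δ) ∧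
      ∃ d : ℕ → Ordinal.{0}, Monotone d ∧ (∀ z < δ, ∃ k, z < d k) ∧ IsProlongable f ξ W L δ d := by
  have hlam₀ : ℵ₀ ≤ lam := (Cardinal.aleph0_le_aleph 1).trans hlam
  have hκ : ℵ₁ < (Order.succ lam).ord.cof := by
    rw [(isRegular_succ hlam₀).cof_ord]
    exact Order.lt_succ_of_le hlam
  choose! F hF using fun l hl => hW.exists_bound hκ hΦ hΦκ hf hL (l := l) hl
  obtain ⟨δ, hδ, hlamδ, hFδ, d, hd, hdδ, hδd⟩ := exists_gt_closed_of_countable_cof hlam₀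
    (fun l hl => (hF l hl).1) (Cardinal.ord_lt_ord.2 (Order.lt_succ lam))
  have hlt : ∀ {p : List Ordinal.{0}}, (∀ a ∈ p, a < δ) → ∀ a ∈ p, a < (Order.succ lam).ord :=
    fun {_} hp a ha => (hp a ha).trans hδ
  refine ⟨δ, hδ, fun p hp => (hF p (hlt hp)).2.1.trans (Iio_subset_Iio (hFδ p hp).le),
    d, hd, hδd, fun p hpW hp N => ?_⟩
  have hdp : ∀ a ∈ d N :: p, a < δ := List.forall_mem_cons.2 ⟨hdδ N, hp⟩
  obtain ⟨a, ha, hda, haW⟩ := (hF _ (hlt hdp)).2.2.2 (d N) p rfl hpW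
  have haδ : a < δ := ha.trans_lt (hFδ _ hdp)
  have hap : ∀ b ∈ a :: p, b < δ := List.forall_mem_cons.2 ⟨haδ, hp⟩
  obtain ⟨m, hm, i, hi, hiW⟩ := frequently_atTop.1
    ((hF _ (hlt hap)).2.2.1 haW δ ⟨(hFδ _ hap).le, hδ⟩) N
  exact ⟨a, haδ, hda, m, hm, i, hi, fun x => ⟨((hiW x).1.trans (hg m)).trans hlamδ, (hiW x).2⟩⟩

theorem exists_isWitness_of_hull_subset (hδκ : δ < κ) {p : ℕ → List Ordinal.{0}}
    {a y : ℕ → Ordinal.{0}} {m : ℕ → ℕ} (hp : ∀ k, p (k + 1) = y k :: a k :: p k)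
    (hξ : ∀ k, hull Φ (Iio ξ.1 ∪ {b | b ∈ p k}) ∩ Iio omega1 ⊆ Iio ξ.1)
    (hδ : ∀ k, hull Φ (Iio ξ.1 ∪ {b | b ∈ p k}) ⊆ Iio δ) (ha : ∀ z < δ, ∃ k, z ≤ a k)
    (hm : Function.Injective m) (hΦ : ∀ l, (Φ l).Countable)
    (hy : ∀ k, y k ∈ separators ξ W (f δ (m k)) (a k :: p k))
    (hne : ∀ l ∈ ladderLimits κ f, ∃ k, y k ≠ l (m k)) :
    ∃ M ⊆ Iio κ, M.Countable ∧ IsClosedUnder Φ M ∧ ∃ X Y, IsWitness κ f M ξ δ X Y := by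
  let D : ℕ → Set Ordinal.{0} := fun k => Iio ξ.1 ∪ {b | b ∈ p k}
  have hD : Monotone D := monotone_nat_of_le_succ fun k =>
    union_subset_union_right _ fun b hb => by
      simp only [mem_ofPred_eq, hp k, List.mem_cons]
      exact .inr (.inr hb)
  have hMD : hull Φ (⋃ k, D k) ⊆ ⋃ k, hull Φ (D k) := hull_iUnion_subset hD.directed_le
  have hDM : ∀ k, D k ⊆ hull Φ (⋃ k, D k) := fun k => (subset_iUnion D k).trans subset_hull
  have hMδ : hull Φ (⋃ k, D k) ⊆ Iio δ := hMD.trans (iUnion_subset hδ)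
  have hyM : ∀ k, y k ∈ hull Φ (⋃ k, D k) := fun k =>
    hDM (k + 1) (.inr (by simp only [mem_ofPred_eq, hp k, List.mem_cons, true_or]))
  have haM : ∀ k, a k ∈ hull Φ (⋃ k, D k) := fun k =>
    hDM (k + 1) (.inr (by simp only [mem_ofPred_eq, hp k, List.mem_cons, true_or, or_true]))
  have hY : ∀ k, Function.extend m y 0 (m k) = y k := fun k => hm.extend_apply y 0 k
  refine ⟨hull Φ (⋃ k, D k), hMδ.trans (Iio_subset_Iio hδκ.le),
    countable_hull hΦ (countable_iUnion fun k => (countable_Iio_of_lt_omega1 ξ.2).union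
      (List.finite_toSet _).countable), isClosedUnder_hull, range m, Function.extend m y 0,
    ?_, hδκ, fun z hz => ?_, ?_, ?_, ?_, ?_, fun l hl => ?_⟩
  · refine Subset.antisymm (fun z ⟨hz, hzω⟩ => ?_) fun z hz =>
      ⟨hDM 0 (.inl hz), (show z < ξ from hz).trans ξ.2⟩
    obtain ⟨k, hk⟩ := mem_iUnion.1 (hMD hz)
    exact hξ k ⟨hk, hzω⟩
  · obtain ⟨k, hk⟩ := ha z hz
    exact ⟨a k, haM k, hk, hMδ (haM k)⟩
  · exact forall_mem_range.2 fun k => (hY k).symm ▸ hyM k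
  · exact forall_mem_range.2 fun k => (hY k).symm ▸ (hy k).1
  · exact forall_mem_range.2 fun k => (hY k).symm ▸ (hy k).2.1
  · exact forall_mem_range.2 fun k => (hY k).symm ▸ (hy k).2.2.1
  · obtain ⟨k, hk⟩ := hne l hl
    exact ⟨m k, mem_range_self k, (hY k).symm ▸ hk⟩

theorem IsRich.exists_isWitness (hW : IsRich κ g Φ ξ W) (hΦ : ∀ l, (Φ l).Countable)
    (hδκ : δ < κ)
    (hδ : ∀ p : List Ordinal.{0}, (∀ a ∈ p, a < δ) → hull Φ (Iio ξ.1 ∪ {a | a ∈ p}) ⊆ Iio δ)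
    {d : ℕ → Ordinal.{0}} (hd : Monotone d) (hδd : ∀ z < δ, ∃ k, z < d k) {L : ℕ → Type}
    (hprol : IsProlongable f ξ W L δ d) {A : Type} {lab : (ℕ → A) → ∀ n, L n}
    (hlab : ∀ s s', (∃ᶠ n in atTop, lab s n = lab s' n) → s = s')
    (hcard : #(ladderLimits κ f) < Cardinal.lift.{1} #(ℕ → A)) :
    ∃ M ⊆ Iio κ, M.Countable ∧ IsClosedUnder Φ M ∧ ∃ X Y, IsWitness κ f M ξ δ X Y := by
  let Q := {t : List Ordinal.{0} × ℕ // t.1 ∈ W ∧ ∀ a ∈ t.1, a < δ}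
  choose a haδ hda m hmN i hi hsep using fun t : Q => hprol t.1.1 t.2.1 t.2.2 t.1.2
  let next : ∀ t, L (m t) → Q := fun t x => ⟨(i t x :: a t :: t.1.1, m t + 1),
    (hsep t x).2.2.2.2,
    List.forall_mem_cons.2 ⟨(hsep t x).1, List.forall_mem_cons.2 ⟨haδ t, t.2.2⟩⟩⟩
  let R : (ℕ → A) → ℕ → Q := fun s => run m next ⟨([], 0), hW.nil_mem, by simp⟩ (lab s)
  have hm : ∀ s, StrictMono fun k => m (R s k) := fun s =>
    strictMono_nat_of_lt_succ fun k => hmN (R s (k + 1))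
  have hk : ∀ s k, k ≤ (R s k).1.2 := fun s k => by
    rcases k with _ | k
    · exact Nat.zero_le _
    · exact Nat.succ_le_succ ((hm s).le_apply)
  by_contra hcon
  have hcapt : ∀ s, ∃ l ∈ ladderLimits κ f, ∀ k,
      i (R s k) (lab s (m (R s k))) = l (m (R s k)) := fun s => by
    by_contra! hne
    refine hcon (exists_isWitness_of_hull_subset hδκ (p := fun k => (R s k).1.1)
      (a := fun k => a (R s k))
      (fun k => rfl) (fun k => hW.hull_inter_subset _ (R s k).2.1) (fun k => hδ _ (R s k).2.2)
      (fun z hz => ?_) (hm s).injective hΦ (fun k => (hsep (R s k) _).2) hne)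
    obtain ⟨k, hzk⟩ := hδd z hz
    exact ⟨k, hzk.le.trans ((hd (hk s k)).trans (hda _))⟩
  choose l hl hls using hcapt
  have hinj : Function.Injective fun s => (⟨l s, hl s⟩ : ladderLimits κ f) := fun s s' h => by
    have hss' : l s = l s' := congrArg Subtype.val h
    exact hlab s s' (frequently_eq_of_run (hm s) hi (hls s) (hss' ▸ hls s'))
  exact hcard.not_ge ((Cardinal.lift_mk_le'.2 ⟨⟨_, hinj⟩⟩).trans (Cardinal.lift_uzero _).le)

theorem isStationaryOmega_nonreflectingSet {lam : Cardinal.{0}} {mu : ℕ → Cardinal.{0}}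
    (hmu : ∀ n, ℵ₁ ≤ mu n) (hmono : Monotone mu) (hmul : ∀ n, mu n < lam)
    (hcof : ∀ ν < lam, ∃ n, ν < mu n) (hg : ∀ n, g n < lam.ord) (hgc : ∀ n, mu n < (g n).cof)
    (hf : IsWeakScale (Order.succ lam).ord f g) (hlam : 𝔠 ≤ lam)
    (hpow : Order.succ lam < lam ^ ℵ₀) :
    IsStationaryOmega (Iio (Order.succ lam).ord) (nonreflectingSet (Order.succ lam).ord f) := by
  have hω₁ : ℵ₁ ≤ lam := (hmu 0).trans (hmul 0).le
  have hω : ℵ₀ ≤ lam := (Cardinal.aleph0_le_aleph 1).trans hω₁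
  have hκ : ℵ₁ < (Order.succ lam).ord.cof := by
    rw [(isRegular_succ hω).cof_ord]
    exact Order.lt_succ_of_le hω₁
  have hinf : (Iio (Order.succ lam).ord).Infinite := by
    rw [← Set.infinite_coe_iff, Cardinal.infinite_iff, Cardinal.mk_Iio_ordinal, Cardinal.card_ord,
      Cardinal.aleph0_le_lift]
    exact hω.trans (Order.le_succ lam)
  have hcard : #(ladderLimits (Order.succ lam).ord f) < Cardinal.lift.{1} #(ℕ → lam.out) := by
    have hpow' : Order.succ lam < #(ℕ → lam.out) := by
      rwa [← Cardinal.power_def, Cardinal.mk_out, Cardinal.mk_nat]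
    have hlam' : 𝔠 ≤ Cardinal.lift.{1} lam := by
      rwa [← Cardinal.lift_continuum.{1, 0}, Cardinal.lift_le]
    rw [← Cardinal.lift_lt.{0, 1}] at hpow'
    refine (mk_ladderLimits_le.trans ?_).trans_lt hpow'
    rw [Cardinal.card_ord]
    refine Cardinal.mul_le_of_le (Cardinal.aleph0_le_lift.2 (hω.trans (Order.le_succ lam)))
      le_rfl ?_
    exact hlam'.trans (Cardinal.lift_le.2 (Order.le_succ lam))
  intro C hC
  obtain ⟨Φ, hΦ, hΦκ, hΦC⟩ := exists_forall_isClosedUnder_mem hinf hC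
  obtain ⟨ξ, W, hW⟩ := exists_isRich hκ (fun n => (hmu n).trans_lt (hgc n)) hΦ
  obtain ⟨L, lab, hL, hlab⟩ := exists_labelling (Cardinal.mk_out lam).le
    (fun n => (Cardinal.aleph0_le_aleph 1).trans (hmu n)) hmono hcof
  obtain ⟨δ, hδκ, hδ, d, hd, hδd, hprol⟩ := hW.exists_isProlongable hω₁ hΦ hΦκ hf hg
    fun n => (hL n).trans_lt (hgc n)
  obtain ⟨M, hMκ, hMc, hM, X, Y, hXY⟩ :=
    hW.exists_isWitness hΦ hδκ hδ hd hδd hprol hlab hcard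
  exact ⟨M, ⟨hC.1 (hΦC M hMκ hMc hM), ξ, δ, X, Y, hXY⟩, hΦC M hMκ hMc hM⟩

end Rich

/-! ### Powers of singular cardinals -/

section Powers

universe u v

/-- The singular cardinal hypothesis at `lam`. Regular `lam` are excluded by `2 ^ cof lam < lam`. -/
def SCHAt (lam : Cardinal.{u}) : Prop :=
  ℵ₀ ≤ lam → 2 ^ lam.ord.cof < lam → lam ^ lam.ord.cof = Order.succ lam

section LinearOrder

variable {D T : Type v} [LinearOrder D] {κ : Cardinal.{v}}

theorem mk_power_le_of_lt_cof (hT : #T < Order.cof D) (hκ : ℵ₀ ≤ κ) (hD : #D ≤ κ)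
    (h : ∀ b : D, #(Iic b) ^ #T ≤ κ) : #D ^ #T ≤ κ := by
  have hbdd (f : T → D) : ∃ b, ∀ t, f t < b :=
    exists_forall_lt_of_mk_lt_cof (Cardinal.lift_lt.2 hT) f
  choose b hb using hbdd
  let code (f : T → D) : Σ b : D, T → Iic b := ⟨b f, fun t => ⟨f t, (hb f t).le⟩⟩
  have hcode : code.Injective := Function.LeftInverse.injective
    (g := fun d t => (d.2 t : D)) fun f => rfl
  calc #D ^ #T = #(T → D) := Cardinal.power_def D T
    _ ≤ #(Σ b : D, T → Iic b) := Cardinal.mk_le_of_injective hcode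
    _ = Cardinal.sum fun b : D => #(Iic b) ^ #T := by simp
    _ ≤ Cardinal.sum fun _ : D => κ := Cardinal.sum_le_sum _ _ h
    _ = #D * κ := by simp
    _ ≤ κ := Cardinal.mul_le_of_le hκ hD le_rfl

theorem mk_power_le_power_cof (h : ∀ b : D, #(Iic b) ^ #T ≤ κ) : #D ^ #T ≤ κ ^ Order.cof D := by
  obtain ⟨s, hs, hs'⟩ := Order.exists_cof_eq D
  let code (f : T → D) (b : s) (t : T) : Iic b.1 := ⟨min (f t) b, min_le_right _ _⟩
  have hcode : code.Injective := fun f g hfg => funext fun t => by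
    obtain ⟨b, hb, hle⟩ := hs (max (f t) (g t))
    have heq : min (f t) b = min (g t) b :=
      congrArg Subtype.val (congrFun (congrFun hfg ⟨b, hb⟩) t)
    rwa [min_eq_left ((le_max_left _ _).trans hle), min_eq_left ((le_max_right _ _).trans hle)]
      at heq
  calc #D ^ #T = #(T → D) := Cardinal.power_def D T
    _ ≤ #(∀ b : s, T → Iic b.1) := Cardinal.mk_le_of_injective hcode
    _ = Cardinal.prod fun b : s => #(Iic b.1) ^ #T := by simp
    _ ≤ Cardinal.prod fun _ : s => κ := Cardinal.prod_le_prod _ _ fun b => h b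
    _ = κ ^ Order.cof D := by simp [hs']

end LinearOrder

variable {lam θ : Cardinal.{u}}

theorem mk_Iic_toType_ord_lt (h : ℵ₀ ≤ lam) (b : lam.ord.ToType) : #(Iic b) < lam := by
  simpa using Cardinal.mk_Iic_lt b (by simp) (by simpa using h)

theorem power_le_of_lt_cof (h : ℵ₀ ≤ lam) (hθ : θ < lam.ord.cof) (hpow : ∀ ν < lam, ν ^ θ ≤ lam) :
    lam ^ θ ≤ lam := by
  simpa using mk_power_le_of_lt_cof (D := lam.ord.ToType) (T := θ.out) (by simpa using hθ) h
    (by simp) fun b => by simpa using hpow _ (mk_Iic_toType_ord_lt h b)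

theorem power_le_power_cof (h : ℵ₀ ≤ lam) (hpow : ∀ ν < lam, ν ^ θ ≤ lam) :
    lam ^ θ ≤ lam ^ lam.ord.cof := by
  simpa using mk_power_le_power_cof (D := lam.ord.ToType) (T := θ.out)
    fun b => by simpa using hpow _ (mk_Iic_toType_ord_lt h b)

theorem power_le_max_of_forall_SCHAt (hθ : ℵ₀ ≤ θ) (hsch : ∀ ν ≤ lam, SCHAt ν) :
    lam ^ θ ≤ max (2 ^ θ) (Order.succ lam) := by
  induction lam using WellFoundedLT.induction with
  | ind lam ih =>
  have hθθ (ν : Cardinal.{u}) : (ν ^ θ) ^ θ = ν ^ θ := by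
    rw [← Cardinal.power_mul, Cardinal.mul_eq_self hθ]
  rcases le_or_gt lam (2 ^ θ) with h2θ | h2θ
  · exact le_max_of_le_left ((Cardinal.power_le_power_right h2θ).trans_eq (hθθ 2))
  by_cases hν : ∃ ν < lam, lam ≤ ν ^ θ
  · obtain ⟨ν, hν, hle⟩ := hν
    calc lam ^ θ ≤ ν ^ θ := (Cardinal.power_le_power_right hle).trans_eq (hθθ ν)
      _ ≤ max (2 ^ θ) (Order.succ ν) := ih ν hν fun μ hμ => hsch μ (hμ.trans hν.le)
      _ ≤ max (2 ^ θ) (Order.succ lam) := max_le_max_left _ (Order.succ_le_succ hν.le)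
  push Not at hν
  have hpow : ∀ ν < lam, ν ^ θ ≤ lam := fun ν h => (hν ν h).le
  have hlam : ℵ₀ ≤ lam := hθ.trans ((Cardinal.cantor θ).trans h2θ).le
  refine le_max_of_le_right ?_
  rcases lt_or_ge θ lam.ord.cof with hcof | hcof
  · exact (power_le_of_lt_cof hlam hcof hpow).trans (Order.le_succ lam)
  · exact (power_le_power_cof hlam hpow).trans_eq
      (hsch lam le_rfl hlam ((Cardinal.power_le_power_left two_ne_zero hcof).trans_lt h2θ))

theorem succ_lt_of_cof_lt (h : ℵ₀ ≤ lam) (hcof : lam.ord.cof < lam) {ν : Cardinal.{u}}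
    (hν : ν < lam) : Order.succ ν < lam := by
  refine (Order.succ_le_of_lt hν).lt_of_ne ?_
  rintro rfl
  have hν' : ℵ₀ ≤ ν := by
    by_contra! hfin
    have hℵ : Order.succ ν = ℵ₀ := (Order.succ_le_of_lt hfin).antisymm h
    simp [hℵ] at hcof
  exact hcof.ne (Cardinal.isRegular_succ hν').cof_ord

end Powers

/-! ### Silver's theorem -/

section Silver

universe u v

/-- By Fodor's lemma `ψ f` is bounded by a single `a j` on a stationary set, and these bounded
values already determine `f`. -/
theorem mk_le_of_forall_isStationary {ι X D : Type v} [LinearOrder ι] [WellFoundedLT ι]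
    [IsRegularCardinalOrder ι] [LinearOrder D] {κ : Cardinal.{v}} (hι : ℵ₀ < Order.cof ι)
    (hκ : ℵ₀ ≤ κ) (hικ : #ι ≤ κ) {a : ι → D} (ha : ∀ j, #(Iic (a j)) ^ #ι ≤ κ) {ψ : X → ι → D}
    (hψ : ∀ f g, f ≠ g → ∃ c, ∀ i ≥ c, ψ f i ≠ ψ g i)
    (hst : ∀ f, IsStationary {i | ∃ j < i, ψ f i < a j}) : #X ≤ κ := by
  have hfodor (f : X) : ∃ j, IsStationary {i | ψ f i < a j} := by
    choose! r hr hra using fun i (hi : ∃ j < i, ψ f i < a j) => hi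
    obtain ⟨j, hj⟩ := exists_isStationary_fiber_of_forall_lt hι (hst f) hr
    exact ⟨j, hj.mono fun i hi => hi.2 ▸ hra i hi.1⟩
  choose j hj using hfodor
  let code (f : X) : Σ j, ι → Iic (a j) := ⟨j f, fun i => ⟨min (ψ f i) (a (j f)), min_le_right _ _⟩⟩
  have hcode : code.Injective := by
    intro f g hfg
    by_contra hne
    obtain ⟨c, hc⟩ := hψ f g hne
    obtain ⟨i, hi, hci⟩ := (isStationary_inter_of_isClub hι.ne' (hj f) (isClub_Ici c)).nonempty
    have heq : min (ψ f i) (a (j f)) = min (ψ g i) (a (j g)) :=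
      congrArg (fun d : Σ j, ι → Iic (a j) => (d.2 i : D)) hfg
    have hjj : j f = j g := congrArg Sigma.fst hfg
    rw [← hjj, min_eq_left (le_of_lt hi)] at heq
    rcases min_choice (ψ g i) (a (j f)) with h | h
    · exact hc i hci (heq.trans h)
    · exact (ne_of_lt hi) (heq.trans h)
  calc #X ≤ #(Σ j, ι → Iic (a j)) := Cardinal.mk_le_of_injective hcode
    _ = Cardinal.sum fun j => #(Iic (a j)) ^ #ι := by simp
    _ ≤ Cardinal.sum fun _ : ι => κ := Cardinal.sum_le_sum _ _ ha
    _ = #ι * κ := by simp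
    _ ≤ κ := Cardinal.mul_le_of_le hκ hικ le_rfl

theorem mk_Iic_ordinal_le {κ : Cardinal.{u}} (hκ : ℵ₀ ≤ κ) {b : Ordinal.{u}} (hb : b.card ≤ κ) :
    #(Iic b) ≤ Cardinal.lift.{u + 1} κ := by
  rw [← Order.Iio_succ, Order.succ_eq_add_one, Cardinal.mk_Iio_ordinal, Cardinal.lift_le,
    Ordinal.card_add_one]
  exact Cardinal.add_le_of_le hκ hb (Cardinal.one_le_aleph0.trans hκ)

theorem exists_injective_forall_le_imp_lt {b o : Ordinal.{u}} (ho : ℵ₀ ≤ o.card)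
    (hb : b.card ≤ o.card) :
    ∃ e : Ordinal.{u} → Ordinal.{u}, e.Injective ∧ ∀ x ≤ b, e x < o := by
  have hcard : #(Iic b) ≤ #(Iio o) := by
    rw [Cardinal.mk_Iio_ordinal]
    exact mk_Iic_ordinal_le ho hb
  obtain ⟨e⟩ := hcard
  classical
  refine ⟨fun x => if h : x ≤ b then e ⟨x, h⟩ else o + x, fun x y hxy => ?_, fun x hx => ?_⟩
  · have hlt (z : Iic b) (w : Ordinal.{u}) : (e z).1 ≠ o + w :=
      ((e z).2.trans_le (le_add_right le_rfl)).ne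
    by_cases hx : x ≤ b <;> by_cases hy : y ≤ b <;> simp only [hx, hy, dite_true, dite_false] at hxy
    · exact congrArg Subtype.val (e.injective (Subtype.ext hxy))
    · exact absurd hxy (hlt _ _)
    · exact absurd hxy.symm (hlt _ _)
    · exact add_left_cancel hxy
  · simp only [hx, dite_true]
    exact (e _).2

theorem mk_le_succ_of_total {X : Type u} {κ : Cardinal.{u}} (hκ : ℵ₀ ≤ κ) {r : X → X → Prop}
    (hr : ∀ x y, r x y ∨ r y x) (h : ∀ y, #{x | r x y} ≤ κ) : #X ≤ Order.succ κ := by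
  by_contra! hX
  obtain ⟨G, hG⟩ := Cardinal.le_mk_iff_exists_set.1 hX.le
  have hU : #(⋃ g : G, {x | r x g}) ≤ Order.succ κ := by
    refine (Cardinal.mk_iUnion_le _).trans ?_
    refine Cardinal.mul_le_of_le (hκ.trans (Order.le_succ κ)) hG.le ?_
    exact (ciSup_le' fun g : G => h g).trans (Order.le_succ κ)
  obtain ⟨x, hx⟩ : ∃ x, x ∉ ⋃ g : G, {x | r x g} := by
    by_contra! hall
    rw [eq_univ_of_forall hall, Cardinal.mk_univ] at hU
    exact hU.not_gt hX
  have hGx : G ⊆ {g | r g x} := fun g hg =>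
    (hr g x).resolve_right fun hgx => hx (mem_iUnion.2 ⟨⟨g, hg⟩, hgx⟩)
  exact ((Cardinal.mk_le_mk_of_subset hGx).trans (h x)).not_gt (hG ▸ Order.lt_succ κ)

theorem mk_le_succ_of_eventually_ne {ι X : Type (u + 1)} [LinearOrder ι] [WellFoundedLT ι]
    [IsRegularCardinalOrder ι] {κ : Cardinal.{u + 1}} (hι : ℵ₀ < Order.cof ι)
    (hκ : ℵ₀ ≤ κ) (hικ : #ι ≤ κ) {a L : ι → Ordinal.{u}} (ha : ∀ j, #(Iic (a j)) ^ #ι ≤ κ) {c : ι}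
    (haL : ∀ i, ∀ x < L i, ∃ j < i, x < a j) (hL : ∀ i ≥ c, ℵ₀ ≤ (L i).card)
    {φ : X → ι → Ordinal.{u}} (hφ : ∀ f g, f ≠ g → ∃ c, ∀ i ≥ c, φ f i ≠ φ g i)
    (hφL : ∀ f, ∀ i ≥ c, (φ f i).card ≤ (L i).card) : #X ≤ Order.succ κ := by
  refine mk_le_succ_of_total (r := fun f g => IsStationary {i | φ f i ≤ φ g i}) hκ
    (fun f g => ?_) fun g => ?_
  · have : Nonempty ι := ⟨c⟩
    rw [← isStationary_union_iff hι.ne']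
    exact IsStationary.univ.mono fun i _ => le_total (φ f i) (φ g i)
  · have he (i : ι) : ∃ e : Ordinal.{u} → Ordinal.{u}, e.Injective ∧
        (c ≤ i → ∀ x ≤ φ g i, e x < L i) := by
      by_cases hi : c ≤ i
      · obtain ⟨e, he, heL⟩ := exists_injective_forall_le_imp_lt (hL i hi) (hφL g i hi)
        exact ⟨e, he, fun _ => heL⟩
      · exact ⟨id, Function.injective_id, fun h => absurd h hi⟩
    choose e he heL using he
    refine mk_le_of_forall_isStationary hι hκ hικ ha
      (ψ := fun (f : {f | IsStationary {i | φ f i ≤ φ g i}}) i => e i (φ f i))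
      (fun f f' hne => ?_) fun f => ?_
    · obtain ⟨d, hd⟩ := hφ f f' (Subtype.coe_ne_coe.2 hne)
      exact ⟨d, fun i hi => (he i).ne (hd i hi)⟩
    · exact (isStationary_inter_of_isClub hι.ne' f.2 (isClub_Ici c)).mono
        fun i hi => haL i _ (heL i hi.2 _ hi.1)

section Concrete

variable {lam θ : Cardinal.{u}}

theorem mk_Iic_ordinal_power_le {b : Ordinal.{u}} {ν : Cardinal.{u}} {ι : Type (u + 1)}
    (hι : #ι = Cardinal.lift.{u + 1} θ) (hν : ℵ₀ ≤ ν) (hb : b.card ≤ ν) :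
    #(Iic b) ^ #ι ≤ Cardinal.lift.{u + 1} (ν ^ θ) := by
  rw [hι, Cardinal.lift_power]
  exact Cardinal.power_le_power_right (mk_Iic_ordinal_le hν hb)

theorem exists_injective_lt_ord {X : Type v} {κ : Cardinal.{u}}
    (h : Cardinal.lift.{u} #X ≤ Cardinal.lift.{v} κ) :
    ∃ φ : X → Ordinal.{u}, φ.Injective ∧ ∀ x, φ x < κ.ord := by
  have h' : Cardinal.lift.{u + 1} #X ≤ Cardinal.lift.{v} #(Iio κ.ord) := by
    simpa using Cardinal.lift_le.{u + 1}.2 h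
  obtain ⟨e⟩ := Cardinal.lift_mk_le'.1 h'
  exact ⟨fun x => e x, Subtype.val_injective.comp e.injective, fun x => (e x).2⟩

theorem exists_truncation_codes {ι : Type (u + 1)} {o : Ordinal.{u}} {L : ι → Ordinal.{u}}
    {C : Set ι} (hι : #ι = Cardinal.lift.{u + 1} θ) (hL : ∀ i ∈ C, ℵ₀ ≤ (L i).card)
    (hpow : ∀ i ∈ C, (L i).card ^ θ ≤ Order.succ (L i).card) :
    ∃ φ : (ι → Iio o) → ι → Ordinal.{u}, ∀ i ∈ C, (∀ f, (φ f i).card ≤ (L i).card) ∧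
      ∀ f g t, φ f i = φ g i → min (f t).1 (L i) = min (g t).1 (L i) := by
  have hcode (i : ι) : ∃ c : (ι → Iic (L i)) → Ordinal.{u}, i ∈ C →
      c.Injective ∧ ∀ x, (c x).card ≤ (L i).card := by
    by_cases hi : i ∈ C
    · obtain ⟨c, hc, hcL⟩ := exists_injective_lt_ord (X := ι → Iic (L i))
        (κ := Order.succ (L i).card) (by
          rw [← Cardinal.power_def, Cardinal.lift_id'.{u, u + 1}]
          exact (mk_Iic_ordinal_power_le hι (hL i hi) le_rfl).trans
            (Cardinal.lift_le.2 (hpow i hi)))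
      exact ⟨c, fun _ => ⟨hc, fun x => Order.lt_succ_iff.1 (Cardinal.lt_ord.1 (hcL x))⟩⟩
    · exact ⟨fun _ => 0, fun h => absurd h hi⟩
  choose c hc using hcode
  let trunc (f : ι → Iio o) (i : ι) (t : ι) : Iic (L i) :=
    ⟨min (f t).1 (L i), mem_Iic.2 (min_le_right _ _)⟩
  refine ⟨fun f i => c i (trunc f i), fun i hi => ⟨fun f => (hc i hi).2 _, fun f g t hfg => ?_⟩⟩
  exact congrArg Subtype.val (congrFun ((hc i hi).1 hfg) t)

theorem exists_eventually_ne_codes {ι : Type (u + 1)} [LinearOrder ι] {o : Ordinal.{u}}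
    {L : ι → Ordinal.{u}} {c : ι} (hι : #ι = Cardinal.lift.{u + 1} θ)
    (hLo : ∀ x < o, ∃ d, ∀ i ≥ d, x ≤ L i) (hL : ∀ i ≥ c, ℵ₀ ≤ (L i).card)
    (hpow : ∀ i ≥ c, (L i).card ^ θ ≤ Order.succ (L i).card) :
    ∃ φ : (ι → Iio o) → ι → Ordinal.{u}, (∀ f, ∀ i ≥ c, (φ f i).card ≤ (L i).card) ∧
      ∀ f g, f ≠ g → ∃ d, ∀ i ≥ d, φ f i ≠ φ g i := by
  obtain ⟨φ, hφ⟩ := exists_truncation_codes (o := o) (C := Ici c) hι hL hpow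
  refine ⟨φ, fun f i hi => (hφ i hi).1 f, fun f g hfg => ?_⟩
  obtain ⟨t, ht⟩ := Function.ne_iff.1 hfg
  obtain ⟨d, hd⟩ := hLo _ (max_lt (f t).2 (g t).2)
  refine ⟨max c d, fun i hi heq => ht (Subtype.ext ?_)⟩
  have hmin := (hφ i ((le_max_left c d).trans hi)).2 f g t heq
  have hmax := hd i ((le_max_right c d).trans hi)
  rwa [min_eq_left ((le_max_left _ _).trans hmax), min_eq_left ((le_max_right _ _).trans hmax)]
    at hmin

theorem exists_filtration {o : Ordinal.{u}} (ho : ℵ₀ ≤ o.cof) :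
    ∃ a L : Iio o.cof.ord → Ordinal.{u}, (∀ j, a j < o) ∧ (∀ i, L i < o) ∧
      (∀ i, ∀ x < L i, ∃ j < i, x < a j) ∧ ∀ x < o, ∃ c, ∀ i ≥ c, x ≤ L i := by
  obtain ⟨s, hs⟩ := Ordinal.exists_isFundamentalSeq (o := o) rfl
  refine ⟨fun j => s j, fun i => ⨆ j : Iio i, (s j).1, fun j => (s j).2, fun i => ?_,
    fun i x hx => ?_, fun x hx => ?_⟩
  · have hi : Cardinal.lift.{u} #(Iio i) < Cardinal.lift.{u + 1} o.cof := by
      rw [Cardinal.lift_id'.{u, u + 1}]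
      exact (mk_Iio_Iio_le i).trans_lt (Cardinal.lift_lt.2 (Cardinal.lt_ord.1 i.2))
    obtain ⟨b, hb, hlt⟩ := exists_lt_forall_lt_of_mk_lt_cof hi fun j : Iio i => (s j).2
    exact (Ordinal.iSup_le fun j => (hlt j).le).trans_lt hb
  · obtain ⟨j, hj⟩ := Ordinal.lt_iSup_iff.1 hx
    exact ⟨j, j.2, hj⟩
  · obtain ⟨_, ⟨j, rfl⟩, hj⟩ := hs.isCofinal_range ⟨x, hx⟩
    refine ⟨⟨j + 1, (Cardinal.isSuccLimit_ord ho).add_one_lt j.2⟩, fun i hi => ?_⟩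
    have hji : j < i := (lt_add_one j.1).trans_le hi
    exact le_trans (b := (s j).1) hj (Ordinal.le_iSup (fun j : Iio i => (s j).1) ⟨j, hji⟩)

theorem power_cof_le_succ_of_aleph0_lt_cof (hcof : ℵ₀ < lam.ord.cof) (h2 : 2 ^ lam.ord.cof < lam)
    (hpow : ∀ μ < lam, μ ^ lam.ord.cof ≤ max (2 ^ lam.ord.cof) (Order.succ μ)) :
    lam ^ lam.ord.cof ≤ Order.succ lam := by
  have hθ : lam.ord.cof < lam := (Cardinal.cantor _).trans h2
  have hlam : ℵ₀ < lam := hcof.trans hθ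
  have hpow' : ∀ μ < lam, μ ^ lam.ord.cof ≤ lam := fun μ hμ =>
    (hpow μ hμ).trans (max_le h2.le (Order.succ_le_of_lt hμ))
  obtain ⟨a, L, ha, hL, haL, hLa⟩ := exists_filtration hcof.le
  obtain ⟨c, hc⟩ := hLa _ (Cardinal.ord_lt_ord.2 h2)
  have h2L : ∀ i ≥ c, 2 ^ lam.ord.cof ≤ (L i).card := fun i hi => Cardinal.ord_le.1 (hc i hi)
  have hLinf : ∀ i ≥ c, ℵ₀ ≤ (L i).card := fun i hi =>
    (hcof.trans (Cardinal.cantor _)).le.trans (h2L i hi)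
  have hι : #(Iio lam.ord.cof.ord) = Cardinal.lift.{u + 1} lam.ord.cof := by simp
  obtain ⟨φ, hφL, hne⟩ := exists_eventually_ne_codes hι hLa hLinf fun i hi =>
    (hpow _ (Cardinal.lt_ord.1 (hL i))).trans (max_le ((h2L i hi).trans (Order.le_succ _)) le_rfl)
  have : IsRegularCardinalOrder (Iio lam.ord.cof.ord) :=
    isRegularCardinalOrder_Iio_ord (isRegular_cof (Cardinal.isSuccLimit_ord hlam.le))
  have hX := mk_le_succ_of_eventually_ne (κ := Cardinal.lift.{u + 1} lam) (a := a)
    (aleph0_lt_cof_Iio.2 (by rwa [Ordinal.cof_ord_cof])) (Cardinal.aleph0_le_lift.2 hlam.le)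
    (hι.trans_le (Cardinal.lift_le.2 hθ.le))
    (fun j => (mk_Iic_ordinal_power_le hι (le_max_right _ _) (le_max_left _ _)).trans
      (Cardinal.lift_le.2 (hpow' _ (max_lt (Cardinal.lt_ord.1 (ha j)) hlam))))
    haL hLinf hne hφL
  rwa [← Cardinal.power_def, hι, Cardinal.mk_Iio_ordinal, Cardinal.card_ord,
    ← Cardinal.lift_power, ← Cardinal.lift_succ, Cardinal.lift_le] at hX

end Concrete

end Silver

/-! ### Countable cofinality -/

section CountableCofinality

universe u

theorem exists_monotone_nat_cofinal {lam ν : Cardinal.{u}} (hcof : lam.ord.cof = ℵ₀)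
    (hlam : ℵ₀ < lam) (hν : ν < lam) :
    ∃ mu : ℕ → Cardinal.{u}, (∀ n, ν ≤ mu n) ∧ Monotone mu ∧ (∀ n, mu n < lam) ∧
      ∀ κ < lam, ∃ n, κ < mu n := by
  obtain ⟨s, hs⟩ := Ordinal.exists_isFundamentalSeq (o := lam.ord) (a := ω) (by simp [hcof])
  let t (n : ℕ) : Ordinal.{u} := s ⟨n, Ordinal.natCast_lt_omega0 n⟩
  refine ⟨fun n => max ν (Order.succ (t n).card), fun n => le_max_left _ _, fun m n hmn => ?_,
    fun n => max_lt hν ?_, fun κ hκ => ?_⟩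
  · have ht : t m ≤ t n := hs.strictMono.monotone (Subtype.mk_le_mk.2 (Nat.cast_le.2 hmn))
    exact max_le_max_left _ (Order.succ_le_succ (Ordinal.card_le_card ht))
  · exact succ_lt_of_cof_lt hlam.le (hcof ▸ hlam) (Cardinal.lt_ord.1 (s _).2)
  · obtain ⟨_, ⟨⟨i, hi⟩, rfl⟩, hle⟩ := hs.isCofinal_range ⟨κ.ord, Cardinal.ord_lt_ord.2 hκ⟩
    obtain ⟨n, rfl⟩ := Ordinal.lt_omega0.1 hi
    exact ⟨n, lt_max_of_lt_right (Order.lt_succ_of_le (Cardinal.ord_le.1 hle))⟩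

theorem power_aleph0_le_succ_of_SSR {lam : Cardinal.{0}} (hcof : lam.ord.cof = ℵ₀)
    (hlam : 𝔠 < lam) (hpow : ∀ ν < lam, ν ^ ℵ₀ ≤ lam) (hssr : SSR (Order.succ lam).ord) :
    lam ^ ℵ₀ ≤ Order.succ lam := by
  by_contra! hbig
  have hω₁ : ℵ₁ < lam := Cardinal.aleph_one_le_continuum.trans_lt hlam
  have hω : ℵ₀ < lam := Cardinal.aleph0_lt_aleph_one.trans hω₁
  obtain ⟨mu, hmu, hmono, hmul, hmuc⟩ := exists_monotone_nat_cofinal hcof hω hω₁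
  obtain ⟨f, g, hg, hgc, hf⟩ :=
    exists_isWeakScale (fun n => (Cardinal.aleph0_le_aleph 1).trans (hmu n)) hmono hmul hmuc hpow
  have hS := isStationaryOmega_nonreflectingSet hmu hmono hmul hmuc hg hgc hf hlam.le hbig
  obtain ⟨I, -, hI, hIc, hIS⟩ := hssr _ (fun x hx => hx.1) isFull_nonreflectingSet hS
  have hκ : ℵ₁ < (Order.succ lam).ord.cof := by
    rw [(isRegular_succ hω.le).cof_ord]
    exact hω₁.trans (Order.lt_succ lam)
  exact not_isStationaryOmega_nonreflectingSet hκ hI hIc hIS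

end CountableCofinality

theorem stmt12_general
    (hssr : ∀ μ : Cardinal.{0}, 𝔠 < μ → μ.ord.cof = ℵ₀ → SSR (Order.succ μ).ord)
    (lam : Cardinal.{0}) : SCHAt lam := by
  induction lam using WellFoundedLT.induction with
  | ind lam ih =>
  intro hlam h2
  have hcof : ℵ₀ ≤ lam.ord.cof := (isRegular_cof (Cardinal.isSuccLimit_ord hlam)).aleph0_le
  have hmax : ∀ μ < lam, μ ^ lam.ord.cof ≤ max (2 ^ lam.ord.cof) (Order.succ μ) := fun μ hμ =>
    power_le_max_of_forall_SCHAt hcof fun ν hν => ih ν (hν.trans_lt hμ)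
  refine le_antisymm ?_ (Order.succ_le_of_lt (Cardinal.lt_power_cof_ord hlam))
  rcases hcof.eq_or_lt with hω | hω
  · rw [← hω] at h2 hmax ⊢
    exact power_aleph0_le_succ_of_SSR hω.symm h2
      (fun ν hν => (hmax ν hν).trans (max_le h2.le (Order.succ_le_of_lt hν))) (hssr lam h2 hω.symm)
  · exact power_cof_le_succ_of_aleph0_lt_cof hω h2 hmax

/-- If `SSR(λ)` holds for every cardinal `λ ≥ ω₂`, then the Singular Cardinal
Hypothesis holds: `λ ^ cof(λ) = λ⁺` for every singular `λ` with `2 ^ cof(λ) < λ`. -/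
theorem stmt12 (hssr : ∀ lam : Cardinal.{0}, aleph 2 ≤ lam → SSR lam.ord) :
    ∀ lam : Cardinal.{0}, ℵ₀ ≤ lam → ¬ lam.IsRegular →
      (2 : Cardinal) ^ lam.ord.cof < lam → lam ^ lam.ord.cof = Order.succ lam := by
  intro lam hlam _ h2
  refine stmt12_general (fun μ hμ _ => hssr _ ?_) lam hlam h2
  rw [← one_add_one_eq_two, ← Cardinal.succ_aleph]
  exact Order.succ_le_succ (Cardinal.aleph_one_le_continuum.trans hμ.le)

end
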